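/- arXiv:1304.7216 — 2 statements merged into one kernel-verified Lean document; each statement's English description precedes it below -/
import Mathlib

section
/- Let 𝕃 be the ladder graph: the simple graph with vertex set ℤ × {0,1} in which (m,a) and (n,b) are adjacent if and only if either a = b and |m − n| = 1, or m = n and a ≠ b. Then for every vertex v of 𝕃, σ_n(v)^{1/n} → (1 + √5)/2 as n → ∞; that is, the connective constant of the ladder is the golden mean. -/
open Filter

/-- The number of `n`-step self-avoiding walks in `G` starting at `v`. -/
noncomputable def sawCount {V : Type*} (G : SimpleGraph V) (v : V) (n : ℕ) : ℕ :=
  Nat.card {p : Σ w : V, G.Walk v w // p.2.IsPath ∧ p.2.length = n}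

/-- The ladder graph: vertex set `ℤ × {0,1}`, with `(m,a)` and `(n,b)` adjacent iff
either `a = b` and `|m − n| = 1`, or `m = n` and `a ≠ b`. -/
def ladder : SimpleGraph (ℤ × Bool) :=
  SimpleGraph.fromRel (fun x y =>
    (x.2 = y.2 ∧ |x.1 - y.1| = 1) ∨ (x.1 = y.1 ∧ x.2 ≠ y.2))

namespace LadderAux

def nbrs (v : ℤ × Bool) : Finset (ℤ × Bool) := {(v.1 + 1, v.2), (v.1 - 1, v.2), (v.1, !v.2)}

lemma mem_nbrs (v w : ℤ × Bool) : w ∈ nbrs v ↔ ladder.Adj v w := by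
  obtain ⟨x, a⟩ := v
  obtain ⟨y, b⟩ := w
  simp only [nbrs, ladder, SimpleGraph.fromRel_adj, Finset.mem_insert, Finset.mem_singleton,
    Prod.mk.injEq, ne_eq]
  rw [abs_eq (by norm_num), abs_eq (by norm_num)]
  cases a <;> cases b <;> simp <;> omega

def cnt : ℕ → Finset (ℤ × Bool) → (ℤ × Bool) → ℕ
  | 0, _, _ => 1
  | n + 1, S, v => ∑ w ∈ (nbrs v).filter (fun w => w ∉ insert v S), cnt n (insert v S) w

abbrev T (n : ℕ) (S : Finset (ℤ × Bool)) (v : ℤ × Bool) : Type :=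
  {p : Σ w : ℤ × Bool, ladder.Walk v w // p.2.IsPath ∧ p.2.length = n ∧ ∀ u ∈ p.2.support, u ∉ S}

def stepFun (n : ℕ) (S : Finset (ℤ × Bool)) (v : ℤ × Bool) (hv : v ∉ S) :
    (Σ w : {w // w ∈ (nbrs v).filter (fun w => w ∉ insert v S)}, T n (insert v S) w.1) →
      T (n + 1) S v := fun q =>
  ⟨⟨q.2.1.1, SimpleGraph.Walk.cons
    ((mem_nbrs v q.1.1).1 (Finset.mem_filter.1 q.1.2).1) q.2.1.2⟩, by
    obtain ⟨⟨w, hw⟩, ⟨⟨z, p⟩, hp, hl, hs⟩⟩ := q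
    refine ⟨?_, ?_, ?_⟩
    · simp only [SimpleGraph.Walk.cons_isPath_iff]
      exact ⟨hp, fun h => hs v h (Finset.mem_insert_self _ _)⟩
    · simpa using hl
    · intro u hu
      simp only [SimpleGraph.Walk.support_cons, List.mem_cons] at hu
      rcases hu with rfl | hu
      · exact hv
      · exact fun h => hs u hu (Finset.mem_insert_of_mem h)⟩

lemma stepFun_bij (n : ℕ) (S : Finset (ℤ × Bool)) (v : ℤ × Bool) (hv : v ∉ S) :
    Function.Bijective (stepFun n S v hv) := by
  constructor
  · rintro ⟨⟨w, hw⟩, ⟨⟨z, p⟩, hp⟩⟩ ⟨⟨w', hw'⟩, ⟨⟨z', p'⟩, hp'⟩⟩ h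
    simp only [stepFun, Subtype.mk.injEq, Sigma.mk.injEq] at h
    obtain ⟨rfl, h⟩ := h
    have h := eq_of_heq h
    simp only [SimpleGraph.Walk.cons.injEq] at h
    obtain ⟨rfl, h⟩ := h
    have h := eq_of_heq h
    subst h
    rfl
  · rintro ⟨⟨z, p⟩, hp, hl, hs⟩
    cases p with
    | nil => simp at hl
    | @cons _ w _ h p =>
      simp only [SimpleGraph.Walk.cons_isPath_iff, SimpleGraph.Walk.length_cons,
        SimpleGraph.Walk.support_cons, List.mem_cons] at hp hl hs
      have key : ∀ u ∈ p.support, u ∉ insert v S := by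
        intro u hu hm
        rcases Finset.mem_insert.1 hm with rfl | hm
        · exact hp.2 hu
        · exact hs u (Or.inr hu) hm
      exact ⟨⟨⟨w, Finset.mem_filter.2 ⟨(mem_nbrs v w).2 h, key w p.start_mem_support⟩⟩,
        ⟨⟨z, p⟩, hp.1, Nat.succ.inj hl, key⟩⟩, rfl⟩

lemma card_T (n : ℕ) : ∀ (S : Finset (ℤ × Bool)) (v : ℤ × Bool), v ∉ S →
    Finite (T n S v) ∧ Nat.card (T n S v) = cnt n S v := by
  induction n with
  | zero =>
    intro S v hv
    have : Nat.card (T 0 S v) = 1 := by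
      rw [Nat.card_eq_one_iff_unique]
      refine ⟨⟨?_⟩, ⟨⟨⟨v, SimpleGraph.Walk.nil⟩, by simp, by simp, by simpa using hv⟩⟩⟩
      rintro ⟨⟨z, p⟩, hp, hl, hs⟩ ⟨⟨z', p'⟩, hp', hl', hs'⟩
      cases p with
      | cons h p => simp at hl
      | nil =>
        cases p' with
        | cons h p => simp at hl'
        | nil => rfl
    exact ⟨Nat.finite_of_card_ne_zero (by omega), this⟩
  | succ n ih =>
    intro S v hv
    have e := Equiv.ofBijective _ (stepFun_bij n S v hv)
    have hf : ∀ w : {w // w ∈ (nbrs v).filter (fun w => w ∉ insert v S)},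
        Finite (T n (insert v S) w.1) := fun w => (ih _ _ (Finset.mem_filter.1 w.2).2).1
    refine ⟨Finite.of_equiv _ e, ?_⟩
    rw [← Nat.card_congr e, Nat.card_sigma, cnt,
      ← Finset.sum_coe_sort ((nbrs v).filter (fun w => w ∉ insert v S))]
    exact Finset.sum_congr rfl fun w _ => (ih _ _ (Finset.mem_filter.1 w.2).2).2

lemma sawCount_eq (n : ℕ) (v : ℤ × Bool) : sawCount ladder v n = cnt n ∅ v := by
  rw [← (card_T n ∅ v (by simp)).2]
  unfold sawCount T
  simp

def gg (n : ℕ) (S : Finset (ℤ × Bool)) (w : ℤ × Bool) : ℕ := if w ∈ S then 0 else cnt n S w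

lemma gg_le (n S w) : gg n S w ≤ cnt n S w := by unfold gg; split_ifs <;> simp

lemma gg_mem {n S w} (h : w ∈ S) : gg n S w = 0 := by simp [gg, h]

lemma gg_not {n S w} (h : w ∉ S) : gg n S w = cnt n S w := by simp [gg, h]

lemma cnt_succ (n : ℕ) (S : Finset (ℤ × Bool)) (x : ℤ) (a : Bool) (d : ℤ) (hd : d = 1 ∨ d = -1) :
    cnt (n + 1) S (x, a) = gg n (insert (x, a) S) (x + d, a) + gg n (insert (x, a) S) (x - d, a)
      + gg n (insert (x, a) S) (x, !a) := by
  have : cnt (n + 1) S (x, a) = gg n (insert (x, a) S) (x + 1, a) +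
      (gg n (insert (x, a) S) (x - 1, a) + gg n (insert (x, a) S) (x, !a)) := by
    rw [cnt, Finset.sum_filter, nbrs, Finset.sum_insert, Finset.sum_insert, Finset.sum_singleton]
    · simp only [gg, ite_not]
    · simp
    · simp; omega
  rw [this]
  rcases hd with rfl | rfl
  · ring
  · rw [sub_neg_eq_add, ← sub_eq_add_neg]; ring

lemma dead (n : ℕ) : ∀ (S : Finset (ℤ × Bool)) (x : ℤ) (b : Bool) (e g : ℤ), (e = 1 ∨ e = -1) →
    1 ≤ g → (x - e, b) ∈ S → (x + e * g, b) ∈ S → (∀ i, 0 ≤ i → i ≤ g → (x + e * i, !b) ∈ S) →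
    cnt n S (x, b) ≤ 1 := by
  induction n with
  | zero => intros; simp [cnt]
  | succ n ih =>
    intro S x b e g he hg h1 h2 h3
    rw [cnt_succ n S x b e he, gg_mem (w := (x - e, b)) (Finset.mem_insert_of_mem h1),
      gg_mem (w := (x, !b)) (Finset.mem_insert_of_mem (by simpa using h3 0 le_rfl (by omega)))]
    by_cases hm : (x + e, b) ∈ insert (x, b) S
    · rw [gg_mem hm]; simp
    · refine (add_zero _).le.trans ((add_zero _).le.trans ((gg_le _ _ _).trans ?_))
      have hg1 : g ≠ 1 := by
        rintro rfl
        apply hm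
        rw [mul_one] at h2
        exact Finset.mem_insert_of_mem h2
      refine ih _ _ _ e (g - 1) he (by omega) ?_ ?_ ?_
      · simp
      · rw [show x + e + e * (g - 1) = x + e * g by ring]
        exact Finset.mem_insert_of_mem h2
      · intro i h0 hi
        rw [show x + e + e * i = x + e * (i + 1) by ring]
        exact Finset.mem_insert_of_mem (h3 _ (by omega) (by omega))

def u : ℕ → ℕ
  | 0 => 1
  | 1 => 2
  | n + 2 => u (n + 1) + u n + 1

lemma u_mono (n : ℕ) : u n ≤ u (n + 1) := by
  cases n with
  | zero => simp [u]
  | succ n => rw [u]; omega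

lemma cnt_one (S) (x : ℤ) (a : Bool) (d : ℤ) (hd : d = 1 ∨ d = -1) (h : (x - d, a) ∈ S) :
    cnt 1 S (x, a) ≤ 2 := by
  rw [cnt_succ 0 S x a d hd, gg_mem (w := (x - d, a)) (Finset.mem_insert_of_mem h)]
  have h1 := gg_le 0 (insert (x, a) S) (x + d, a)
  have h2 := gg_le 0 (insert (x, a) S) (x, !a)
  simp only [cnt] at h1 h2
  omega

lemma forwardP (n : ℕ) : ∀ (S : Finset (ℤ × Bool)) (x : ℤ) (a : Bool) (d g : ℤ), (d = 1 ∨ d = -1) →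
    1 ≤ g → (x - d * g, !a) ∈ S → (∀ i, 1 ≤ i → i ≤ g → (x - d * i, a) ∈ S) →
    cnt n S (x, a) ≤ u n := by
  induction n using Nat.strong_induction_on with
  | _ n ih =>
  intro S x a d g hd hg h1 h2
  have hb : (x - d, a) ∈ S := by simpa using h2 1 le_rfl hg
  match n, ih with
  | 0, _ => simp [cnt, u]
  | 1, _ => exact cnt_one S x a d hd hb
  | n + 2, ih =>
    rw [cnt_succ (n + 1) S x a d hd, gg_mem (w := (x - d, a)) (Finset.mem_insert_of_mem hb), u]
    have hA : gg (n + 1) (insert (x, a) S) (x + d, a) ≤ u (n + 1) := by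
      refine (gg_le _ _ _).trans (ih (n + 1) (by omega) _ _ _ d (g + 1) hd (by omega) ?_ ?_)
      · rw [show x + d - d * (g + 1) = x - d * g by ring]
        exact Finset.mem_insert_of_mem h1
      · intro i h0 hi
        rw [show x + d - d * i = x - d * (i - 1) by ring]
        by_cases h : i = 1
        · subst h; simp
        · exact Finset.mem_insert_of_mem (h2 _ (by omega) (by omega))
    have hB : gg (n + 1) (insert (x, a) S) (x, !a) ≤ u n + 1 := by
      refine (gg_le _ _ _).trans ?_
      rw [cnt_succ n _ x (!a) d hd, gg_mem (w := (x, !!a)) (by simp)]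
      have hC : gg n (insert (x, !a) (insert (x, a) S)) (x + d, !a) ≤ u n := by
        refine (gg_le _ _ _).trans (ih n (by omega) _ _ _ d 1 hd le_rfl ?_ ?_)
        · simp
        · intro i h0 hi
          obtain rfl : i = 1 := by omega
          simp
      have hD : gg n (insert (x, !a) (insert (x, a) S)) (x - d, !a) ≤ 1 := by
        by_cases hm : (x - d, !a) ∈ (insert (x, !a) (insert (x, a) S))
        · rw [gg_mem hm]; simp
        · refine (gg_le _ _ _).trans ?_
          have hg1 : g ≠ 1 := by
            rintro rfl
            apply hm
            rw [mul_one] at h1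
            exact Finset.mem_insert_of_mem (Finset.mem_insert_of_mem h1)
          refine dead n _ _ _ (-d) (g - 1) (by omega) (by omega) ?_ ?_ ?_
          · simp
          · rw [show x - d + -d * (g - 1) = x - d * g by ring]
            exact Finset.mem_insert_of_mem (Finset.mem_insert_of_mem h1)
          · intro i h0 hi
            rw [show x - d + -d * i = x - d * (i + 1) by ring, Bool.not_not]
            exact Finset.mem_insert_of_mem (Finset.mem_insert_of_mem
              (h2 _ (by omega) (by omega)))
      omega
    omega

lemma backB (n : ℕ) : ∀ (S : Finset (ℤ × Bool)) (x : ℤ) (b : Bool) (e g : ℤ), (e = 1 ∨ e = -1) →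
    0 ≤ g → (x - e, b) ∈ S → (∀ i, 0 ≤ i → i ≤ g → (x + e * i, !b) ∈ S) →
    cnt n S (x, b) ≤ u n := by
  induction n with
  | zero => intros; simp [cnt, u]
  | succ n ih =>
    intro S x b e g he hg h1 h3
    have h0 : (x, !b) ∈ S := by simpa using h3 0 le_rfl (by omega)
    rw [cnt_succ n S x b e he, gg_mem (w := (x - e, b)) (Finset.mem_insert_of_mem h1),
      gg_mem (w := (x, !b)) (Finset.mem_insert_of_mem h0)]
    refine (add_zero _).le.trans ((add_zero _).le.trans ((gg_le _ _ _).trans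
      (le_trans ?_ (u_mono n))))
    by_cases hg0 : g = 0
    · refine forwardP n _ _ _ e 1 he le_rfl ?_ ?_
      · simpa using h0
      · intro i h0 hi
        obtain rfl : i = 1 := by omega
        simp
    · refine ih _ _ _ e (g - 1) he (by omega) ?_ ?_
      · simp
      · intro i h0 hi
        rw [show x + e + e * i = x + e * (i + 1) by ring]
        exact Finset.mem_insert_of_mem (h3 _ (by omega) (by omega))

def w : ℕ → ℕ
  | 0 => 1
  | 1 => 2
  | n + 2 => w (n + 1) + 2 * u n

lemma initI (n : ℕ) : ∀ (S : Finset (ℤ × Bool)) (x : ℤ) (a : Bool) (d g : ℤ), (d = 1 ∨ d = -1) →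
    1 ≤ g → (∀ i, 1 ≤ i → i ≤ g → (x - d * i, a) ∈ S) →
    cnt n S (x, a) ≤ w n := by
  induction n using Nat.strong_induction_on with
  | _ n ih =>
  intro S x a d g hd hg h2
  have hb : (x - d, a) ∈ S := by simpa using h2 1 le_rfl hg
  match n, ih with
  | 0, _ => simp [cnt, w]
  | 1, _ => exact cnt_one S x a d hd hb
  | n + 2, ih =>
    rw [cnt_succ (n + 1) S x a d hd, gg_mem (w := (x - d, a)) (Finset.mem_insert_of_mem hb), w]
    have hA : gg (n + 1) (insert (x, a) S) (x + d, a) ≤ w (n + 1) := by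
      refine (gg_le _ _ _).trans (ih (n + 1) (by omega) _ _ _ d (g + 1) hd (by omega) ?_)
      · intro i h0 hi
        rw [show x + d - d * i = x - d * (i - 1) by ring]
        by_cases h : i = 1
        · subst h; simp
        · exact Finset.mem_insert_of_mem (h2 _ (by omega) (by omega))
    have hB : gg (n + 1) (insert (x, a) S) (x, !a) ≤ 2 * u n := by
      refine (gg_le _ _ _).trans ?_
      rw [cnt_succ n _ x (!a) d hd, gg_mem (w := (x, !!a)) (by simp)]
      have hC : gg n (insert (x, !a) (insert (x, a) S)) (x + d, !a) ≤ u n := by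
        refine (gg_le _ _ _).trans (forwardP n _ _ _ d 1 hd le_rfl ?_ ?_)
        · simp
        · intro i h0 hi
          obtain rfl : i = 1 := by omega
          simp
      have hD : gg n (insert (x, !a) (insert (x, a) S)) (x - d, !a) ≤ u n := by
        refine (gg_le _ _ _).trans ?_
        refine backB n _ _ _ (-d) (g - 1) (by omega) (by omega) ?_ ?_
        · simp
        · intro i h0 hi
          rw [show x - d + -d * i = x - d * (i + 1) by ring, Bool.not_not]
          exact Finset.mem_insert_of_mem (Finset.mem_insert_of_mem
            (h2 _ (by omega) (by omega)))
      omega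
    omega

lemma start_le (n : ℕ) (x : ℤ) (a : Bool) : cnt (n + 2) ∅ (x, a) ≤ 2 * w (n + 1) + 2 * u n := by
  have hh : ∀ d : ℤ, (d = 1 ∨ d = -1) → gg (n + 1) (insert (x, a) ∅) (x + d, a) ≤ w (n + 1) := by
    intro d hd
    refine (gg_le _ _ _).trans (initI (n + 1) _ _ _ d 1 hd le_rfl ?_)
    intro i h0 hi
    obtain rfl : i = 1 := by omega
    simp
  have hc : ∀ d : ℤ, (d = 1 ∨ d = -1) →
      gg n (insert (x, !a) (insert (x, a) ∅)) (x + d, !a) ≤ u n := by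
    intro d hd
    refine (gg_le _ _ _).trans (forwardP n _ _ _ d 1 hd le_rfl ?_ ?_)
    · simp
    · intro i h0 hi
      obtain rfl : i = 1 := by omega
      simp
  have hB : gg (n + 1) (insert (x, a) ∅) (x, !a) ≤ 2 * u n := by
    refine (gg_le _ _ _).trans ?_
    rw [cnt_succ n _ x (!a) 1 (Or.inl rfl), gg_mem (w := (x, !!a)) (by simp)]
    have h1 := hc 1 (Or.inl rfl)
    have h2 := hc (-1) (Or.inr rfl)
    rw [← sub_eq_add_neg] at h2
    omega
  rw [cnt_succ (n + 1) _ x a 1 (Or.inl rfl)]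
  have h1 := hh 1 (Or.inl rfl)
  have h2 := hh (-1) (Or.inr rfl)
  rw [← sub_eq_add_neg] at h2
  omega

lemma lower (n : ℕ) : ∀ (S : Finset (ℤ × Bool)) (x : ℤ) (a : Bool),
    (∀ y b, x < y → (y, b) ∉ S) → (x, !a) ∉ S → Nat.fib (n + 1) ≤ cnt n S (x, a) := by
  induction n using Nat.strong_induction_on with
  | _ n ih =>
  intro S x a h1 h2
  have key : ∀ m, gg m (insert (x, a) S) (x + 1, a) = cnt m (insert (x, a) S) (x + 1, a) := by
    intro m
    apply gg_not
    simp [h1 (x + 1) a (by omega)]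
  have nxt : ∀ y b, x + 1 < y → (y, b) ∉ insert (x, a) S := by
    intro y b hy
    simp only [Finset.mem_insert, Prod.mk.injEq, not_or]
    exact ⟨by omega, h1 y b (by omega)⟩
  have nx2 : (x + 1, !a) ∉ insert (x, a) S := by
    simp [h1 (x + 1) (!a) (by omega)]
  match n, ih with
  | 0, _ => simp [cnt]
  | 1, _ =>
    rw [cnt_succ 0 S x a 1 (Or.inl rfl), key]
    simp [cnt]
    omega
  | n + 2, ih =>
    have hA := ih (n + 1) (by omega) _ _ _ nxt nx2
    have hB : Nat.fib (n + 1) ≤ gg (n + 1) (insert (x, a) S) (x, !a) := by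
      rw [gg_not (by simp [h2]), cnt_succ n _ x (!a) 1 (Or.inl rfl),
        gg_not (w := (x + 1, !a)) (by simp [h1 (x + 1) (!a) (by omega)])]
      have := ih n (by omega) (insert (x, !a) (insert (x, a) S)) (x + 1) (!a) (by
        intro y b hy
        simp only [Finset.mem_insert, Prod.mk.injEq, not_or]
        exact ⟨by omega, by omega, h1 y b (by omega)⟩) (by
        simp [h1 (x + 1) a (by omega)])
      omega
    rw [cnt_succ (n + 1) S x a 1 (Or.inl rfl), key, Nat.fib_add_two]
    omega

open Real in
lemma u_le (n : ℕ) : (u n : ℝ) + 1 ≤ 2 * goldenRatio ^ n ∧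
    (u (n + 1) : ℝ) + 1 ≤ 2 * goldenRatio ^ (n + 1) := by
  have h2 := goldenRatio_sq
  induction n with
  | zero =>
    have : (3 : ℝ) / 2 ≤ goldenRatio := by nlinarith [one_lt_goldenRatio]
    norm_num [u]; linarith
  | succ n ih =>
    refine ⟨ih.2, ?_⟩
    have : goldenRatio ^ (n + 1 + 1) = goldenRatio ^ (n + 1) + goldenRatio ^ n := by
      rw [pow_succ, pow_succ]; linear_combination goldenRatio ^ n * h2
    rw [this, u]
    push_cast
    linarith [ih.1, ih.2]

open Real in
lemma w_le (n : ℕ) : (w n : ℝ) ≤ 4 * goldenRatio ^ n ∧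
    (w (n + 1) : ℝ) ≤ 4 * goldenRatio ^ (n + 1) := by
  have h2 := goldenRatio_sq
  induction n with
  | zero =>
    norm_num [w]; linarith [one_lt_goldenRatio]
  | succ n ih =>
    refine ⟨ih.2, ?_⟩
    have : goldenRatio ^ (n + 1 + 1) = goldenRatio ^ (n + 1) + goldenRatio ^ n := by
      rw [pow_succ, pow_succ]; linear_combination goldenRatio ^ n * h2
    rw [this, w]
    push_cast
    linarith [ih.1, ih.2, (u_le n).1]

open Real in
lemma fib_ge (n : ℕ) : goldenRatio ^ n ≤ goldenRatio * Nat.fib (n + 1) ∧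
    goldenRatio ^ (n + 1) ≤ goldenRatio * Nat.fib (n + 2) := by
  have h2 := goldenRatio_sq
  induction n with
  | zero => norm_num; exact one_lt_goldenRatio.le
  | succ n ih =>
    refine ⟨ih.2, ?_⟩
    have : goldenRatio ^ (n + 1 + 1) = goldenRatio ^ (n + 1) + goldenRatio ^ n := by
      rw [pow_succ, pow_succ]; linear_combination goldenRatio ^ n * h2
    rw [this, Nat.fib_add_two]
    push_cast
    linarith [ih.1, ih.2]

open Real in
lemma tendsto_aux (C : ℝ) (hC : 0 < C) :
    Tendsto (fun n : ℕ => (C * goldenRatio ^ n) ^ ((1 : ℝ) / n)) atTop (nhds goldenRatio) := by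
  have h1 : Tendsto (fun n : ℕ => C ^ ((1 : ℝ) / n) * goldenRatio) atTop
      (nhds (C ^ (0 : ℝ) * goldenRatio)) := by
    refine Tendsto.mul_const _ ?_
    exact (Real.continuousAt_const_rpow hC.ne').tendsto.comp tendsto_one_div_atTop_nhds_zero_nat
  rw [Real.rpow_zero, one_mul] at h1
  refine h1.congr' ?_
  filter_upwards [eventually_ne_atTop 0] with n hn
  rw [Real.mul_rpow hC.le (pow_nonneg goldenRatio_pos.le n), one_div,
    Real.pow_rpow_inv_natCast goldenRatio_pos.le hn]

end LadderAux

/-- The connective constant of the ladder graph is the golden mean `(1 + √5)/2`. -/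
theorem ladder_connective_constant :
    ∀ v : ℤ × Bool,
      Tendsto (fun n : ℕ => (sawCount ladder v n : ℝ) ^ ((1 : ℝ) / n)) atTop
        (nhds ((1 + Real.sqrt 5) / 2)) := by
  rintro ⟨x, a⟩
  have hpos := Real.goldenRatio_pos
  refine tendsto_of_tendsto_of_tendsto_of_le_of_le'
    (LadderAux.tendsto_aux (Real.goldenRatio⁻¹) (by positivity))
    (LadderAux.tendsto_aux 12 (by norm_num)) ?_ ?_
  · refine Eventually.of_forall fun n => ?_
    refine Real.rpow_le_rpow (by positivity) ?_ (by positivity)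
    have h1 : (Nat.fib (n + 1) : ℝ) ≤ (sawCount ladder (x, a) n : ℝ) := by
      rw [LadderAux.sawCount_eq]
      exact_mod_cast LadderAux.lower n ∅ x a (by simp) (by simp)
    rw [inv_mul_le_iff₀ hpos]
    exact (LadderAux.fib_ge n).1.trans (mul_le_mul_of_nonneg_left h1 hpos.le)
  · filter_upwards [eventually_ge_atTop 2] with n hn
    obtain ⟨m, rfl⟩ := Nat.exists_eq_add_of_le' hn
    refine Real.rpow_le_rpow (by positivity) ?_ (by positivity)
    have h1 : (sawCount ladder (x, a) (m + 2) : ℝ) ≤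
        2 * LadderAux.w (m + 1) + 2 * LadderAux.u m := by
      rw [LadderAux.sawCount_eq]
      exact_mod_cast LadderAux.start_le m x a
    have h2 := (LadderAux.w_le m).2
    have h3 := (LadderAux.u_le m).1
    have : Real.goldenRatio ^ (m + 2) = Real.goldenRatio ^ (m + 1) + Real.goldenRatio ^ m := by
      rw [pow_succ, pow_succ]; linear_combination Real.goldenRatio ^ m * Real.goldenRatio_sq
    have h4 : 0 < Real.goldenRatio ^ m := by positivity
    have h5 : 0 < Real.goldenRatio ^ (m + 1) := by positivity
    rw [this]
    linarith
end

section
/- Let ℍ be the hexagonal lattice in its brick-wall representation: the simple graph with vertex set ℤ × ℤ in which (a,b) and (c,d) are adjacent if and only if either b = d and |a − c| = 1, or a = c, |b − d| = 1, and a + min(b,d) is even. Then for every vertex v of ℍ, σ_n(v)^{1/n} → √(2 + √2) as n → ∞; that is, the connective constant of the hexagonal lattice equals √(2+√2). -/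
open Filter

/-- The hexagonal lattice in its brick-wall representation: vertex set `ℤ × ℤ`, with
`(a,b)` and `(c,d)` adjacent iff either `b = d` and `|a − c| = 1`, or `a = c`,
`|b − d| = 1`, and `a + min b d` is even. -/
def hexLattice : SimpleGraph (ℤ × ℤ) :=
  SimpleGraph.fromRel (fun x y =>
    (x.2 = y.2 ∧ |x.1 - y.1| = 1) ∨
    (x.1 = y.1 ∧ |x.2 - y.2| = 1 ∧ Even (x.1 + min x.2 y.2)))

namespace Hex

/-- brick-wall adjacency, in a linear-arithmetic friendly form -/
def Adj (p q : ℤ × ℤ) : Prop :=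
  (q.2 = p.2 ∧ (q.1 = p.1 + 1 ∨ q.1 = p.1 - 1)) ∨
  (q.1 = p.1 ∧ ((q.2 = p.2 + 1 ∧ (p.1 + p.2) % 2 = 0) ∨ (q.2 = p.2 - 1 ∧ (p.1 + p.2) % 2 = 1)))

/-- unit steps of the square lattice -/
def U (p q : ℤ × ℤ) : Prop :=
  (q.2 = p.2 ∧ (q.1 = p.1 + 1 ∨ q.1 = p.1 - 1)) ∨ (q.1 = p.1 ∧ (q.2 = p.2 + 1 ∨ q.2 = p.2 - 1))

theorem Adj.U {p q : ℤ × ℤ} (h : Adj p q) : U p q := by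
  unfold Adj at h; unfold Hex.U; omega

theorem Adj.symm {p q : ℤ × ℤ} (h : Adj p q) : Adj q p := by
  unfold Adj at *; omega

theorem Adj.ne {p q : ℤ × ℤ} (h : Adj p q) : p ≠ q := by
  rintro rfl; unfold Adj at h; omega

def sg (a : ℤ) : ℤ := if 0 < a then 1 else if a < 0 then -1 else 0

/-- angle (in eighths of a turn) swept around `z` on the unit step `u → v` -/
def dd (z u v : ℤ × ℤ) : ℤ :=
  if u.2 = v.2 then (if u.1 = z.1 ∨ v.1 = z.1 then sg (u.2 - z.2) * (u.1 - v.1) else 0)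
  else (if u.2 = z.2 ∨ v.2 = z.2 then sg (u.1 - z.1) * (v.2 - u.2) else 0)

theorem dd_symm (z : ℤ × ℤ) {u v : ℤ × ℤ} (huv : U u v) : dd z v u = - dd z u v := by
  unfold dd
  by_cases h : u.2 = v.2
  · rw [if_pos h, if_pos h.symm, h]
    by_cases h' : u.1 = z.1 ∨ v.1 = z.1
    · rw [if_pos h', if_pos h'.symm]; ring
    · rw [if_neg h', if_neg (fun k => h' k.symm)]; ring
  · rw [if_neg h, if_neg (fun k => h k.symm)]
    by_cases h' : u.2 = z.2 ∨ v.2 = z.2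
    · rw [if_pos h', if_pos h'.symm]
      have h2 : u.1 = v.1 := by unfold U at huv; omega
      rw [h2]; ring
    · rw [if_neg h', if_neg (fun k => h' k.symm)]; ring

theorem dd_right (z1 z2 b1 b2 : ℤ) : dd (z1, z2) (b1, b2) (b1 + 1, b2) =
    if b1 = z1 ∨ b1 + 1 = z1 then - sg (b2 - z2) else 0 := by
  simp [dd]

theorem dd_up (z1 z2 b1 b2 : ℤ) : dd (z1, z2) (b1, b2) (b1, b2 + 1) =
    if b2 = z2 ∨ b2 + 1 = z2 then sg (b1 - z1) else 0 := by
  simp [dd]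

theorem square_aux {z z' b c : ℤ × ℤ} (hz : z' = (z.1 + 1, z.2) ∨ z' = (z.1, z.2 + 1))
    (hb : c = (b.1 + 1, b.2) ∨ c = (b.1, b.2 + 1)) (h1 : b ≠ z) (h2 : b ≠ z')
    (h3 : c ≠ z) (h4 : c ≠ z') : dd z b c + dd c z z' = dd b z z' + dd z' b c := by
  obtain ⟨z1, z2⟩ := z
  obtain ⟨b1, b2⟩ := b
  rcases hz with rfl | rfl <;> rcases hb with rfl | rfl <;>
  simp only [dd_right, dd_up, ne_eq, Prod.mk.injEq, sg] at * <;>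
  (repeat' split) <;> omega

theorem U.symm {p q : ℤ × ℤ} (h : U p q) : U q p := by
  unfold U at *; omega

theorem U_or {p q : ℤ × ℤ} (h : U p q) : (q = (p.1 + 1, p.2) ∨ q = (p.1, p.2 + 1)) ∨
    (p = (q.1 + 1, q.2) ∨ p = (q.1, q.2 + 1)) := by
  simp only [Prod.ext_iff]; unfold U at h; omega

theorem square {z z' b c : ℤ × ℤ} (hz : U z z') (hb : U b c) (h1 : b ≠ z) (h2 : b ≠ z')
    (h3 : c ≠ z) (h4 : c ≠ z') : dd z b c + dd c z z' = dd b z z' + dd z' b c := by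
  rcases U_or hz with kz | kz <;> rcases U_or hb with kb | kb
  · exact square_aux kz kb h1 h2 h3 h4
  · have := square_aux kz kb h3 h4 h1 h2
    rw [dd_symm _ hb, dd_symm _ hb] at this; linarith
  · have := square_aux kz kb h2 h1 h4 h3
    rw [dd_symm _ hz, dd_symm _ hz] at this; linarith
  · have := square_aux kz kb h4 h3 h2 h1
    rw [dd_symm _ hz, dd_symm _ hz, dd_symm _ hb, dd_symm _ hb] at this; linarith

/-- angle swept around `z` along a path (lists are paths with the tip at the head) -/
def R (z : ℤ × ℤ) : List (ℤ × ℤ) → ℤ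
  | c :: b :: l => dd z b c + R z (b :: l)
  | _ => 0

def tc (p v u : ℤ × ℤ) : ℤ := dd u p v + dd p v u

/-- total turning -/
def th : List (ℤ × ℤ) → ℤ
  | u :: v :: p :: l => tc p v u + th (v :: p :: l)
  | _ => 0

theorem R_cons (z c b : ℤ × ℤ) (l : List (ℤ × ℤ)) : R z (c :: b :: l) = dd z b c + R z (b :: l) := rfl

theorem base_change {z z' : ℤ × ℤ} (hz : U z z') (h : ℤ × ℤ) (t : List (ℤ × ℤ))
    (hc : (h :: t).IsChain U) (h1 : z ∉ h :: t) (h2 : z' ∉ h :: t) :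
    R z (h :: t) + dd h z z' = dd ((h :: t).getLast (by simp)) z z' + R z' (h :: t) := by
  induction t generalizing h with
  | nil => simp [R]
  | cons b t ih =>
    rw [List.isChain_cons_cons] at hc
    have := ih b hc.2 (fun k => h1 (List.mem_cons_of_mem _ k)) (fun k => h2 (List.mem_cons_of_mem _ k))
    rw [R_cons, R_cons, List.getLast_cons (by simp)]
    simp only [List.mem_cons, not_or] at h1 h2
    have s := square hz hc.1.symm (Ne.symm h1.2.1) (Ne.symm h2.2.1) (Ne.symm h1.1) (Ne.symm h2.1)
    linarith

theorem hopf (a u : ℤ × ℤ) (l : List (ℤ × ℤ)) (hc : (u :: (l ++ [a])).IsChain U)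
    (hn : (u :: (l ++ [a])).Nodup) :
    th (u :: (l ++ [a])) = R a (u :: l) + R u (l ++ [a]) := by
  induction l generalizing u with
  | nil => simp [th, R]
  | cons v l ih =>
    rw [List.cons_append, List.isChain_cons_cons] at hc
    rw [List.cons_append, List.nodup_cons] at hn
    have IH := ih v hc.2 hn.2
    have hv := (List.nodup_cons.1 hn.2).1
    have hu : u ∉ v :: (l ++ [a]) := hn.1
    have key : th (u :: v :: (l ++ [a])) = R u (v :: (l ++ [a])) - R u (l ++ [a]) + dd ((l ++ [a]).head (by simp)) v u
        + th (v :: (l ++ [a])) := by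
      cases l with
      | nil => simp [th, R, tc]
      | cons x l => simp [th, R, tc]
    obtain ⟨x, l', hx⟩ : ∃ x l', l ++ [a] = x :: l' := by
      cases l with
      | nil => exact ⟨_, _, rfl⟩
      | cons x l => exact ⟨_, _, rfl⟩
    have hla : ∀ hh, (x :: l').getLast hh = a := by
      intro hh; simp only [← hx]; simp
    have bc := base_change (z := v) (z' := u) hc.1.symm x l' (hx ▸ hc.2.tail) (hx ▸ hv)
      (fun k => hu (List.mem_cons_of_mem _ (hx ▸ k)))
    rw [hla] at bc
    simp only [hx, List.head_cons] at key IH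
    rw [List.cons_append, hx, key, IH, R_cons a]
    linarith

theorem th_append (l t : List (ℤ × ℤ)) (a b : ℤ × ℤ) :
    th (l ++ a :: b :: t) = th (l ++ [a, b]) + th (a :: b :: t) := by
  induction l with
  | nil => simp [th]
  | cons u l ih =>
    match l with
    | [] => simp [th]
    | [v] => simp [th, add_assoc]
    | v :: p :: l =>
      simp only [List.cons_append, th] at ih ⊢
      rw [ih]; ring

theorem R_append (z c : ℤ × ℤ) (l : List (ℤ × ℤ)) (b : ℤ × ℤ) :
    R z (l ++ [b, c]) = R z (l ++ [b]) + dd z c b := by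
  induction l with
  | nil => simp [R]
  | cons u l ih =>
    match l with
    | [] => simp [R]
    | v :: l =>
      simp only [List.cons_append, R] at ih ⊢
      rw [ih]; ring

/-- turning of a closed simple path -/
theorem closed_turn (v r q : ℤ × ℤ) (l : List (ℤ × ℤ))
    (hc : (v :: (r :: (l ++ [q]) ++ [v])).IsChain U) (hn : (r :: (l ++ [q]) ++ [v]).Nodup) :
    th (v :: (r :: (l ++ [q]) ++ [v])) = 2 * R v (r :: (l ++ [q])) + dd r v q + dd q r v := by
  obtain ⟨x, l', hx⟩ : ∃ x l', l ++ [q] = x :: l' := by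
    cases l with
    | nil => exact ⟨_, _, rfl⟩
    | cons x l => exact ⟨_, _, rfl⟩
  have hla : ∀ hh, (x :: l').getLast hh = q := by
    intro hh; simp only [← hx]; simp
  rw [List.cons_append, List.isChain_cons_cons] at hc
  have H := hopf v r (l ++ [q]) hc.2 hn
  have h1 : th (v :: (r :: (l ++ [q]) ++ [v])) = tc x r v + th (r :: (l ++ [q] ++ [v])) := by
    simp [hx, th]
  have hn' := hn
  rw [List.cons_append, List.nodup_cons] at hn'
  have bc := base_change (z := r) (z' := v) hc.1.symm x l' (by
      have := hc.2.tail
      simp only [List.tail_cons] at this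
      rw [← hx]
      exact List.IsChain.left_of_append this)
    (fun k => hn'.1 (by rw [hx]; exact List.mem_append_left _ k))
    (fun k => by
      have := (List.nodup_append.1 hn'.2).2.2 v (hx ▸ k) v (by simp)
      exact this rfl)
  rw [hla] at bc
  have h2 : R r (l ++ [q] ++ [v]) = R r (x :: l') + dd r v q := by
    rw [← hx, List.append_assoc]; exact R_append _ _ _ _
  have h3 : R v (r :: (l ++ [q])) = dd v x r + R v (x :: l') := by rw [hx]; rfl
  rw [h1, H, h2, h3]
  unfold tc
  rw [dd_symm x (hc.1)] at *
  have e : dd v x r = dd v x r := rfl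
  linarith

theorem R_closed_const (v : ℤ × ℤ) (C : List (ℤ × ℤ)) (hC : (v :: C).IsChain U)
    (hl : (v :: C).getLast (by simp) = v) (z : ℤ × ℤ) (t : List (ℤ × ℤ)) (ht : (z :: t).IsChain U)
    (hd : ∀ w ∈ z :: t, w ∉ v :: C) : R z (v :: C) = R ((z :: t).getLast (by simp)) (v :: C) := by
  induction t generalizing z with
  | nil => rfl
  | cons y t ih =>
    rw [List.isChain_cons_cons] at ht
    rw [List.getLast_cons (by simp), ← ih y ht.2 (fun w hw => hd w (List.mem_cons_of_mem _ hw))]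
    have := base_change ht.1 v C hC (hd z (by simp)) (hd y (by simp))
    rw [hl] at this
    linarith

/-- telescoping -/
theorem R_tele (z : ℤ × ℤ) (f : ℤ × ℤ → ℤ) (P : ℤ × ℤ → Prop)
    (hf : ∀ u v, U u v → P u → P v → dd z u v = f v - f u)
    (h : ℤ × ℤ) (t : List (ℤ × ℤ)) (hc : (h :: t).IsChain U) (hP : ∀ w ∈ h :: t, P w) :
    R z (h :: t) = f h - f ((h :: t).getLast (by simp)) := by
  induction t generalizing h with
  | nil => simp [R]
  | cons b t ih =>
    rw [List.isChain_cons_cons] at hc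
    rw [R_cons, List.getLast_cons (by simp), ih b hc.2 (fun w hw => hP w (List.mem_cons_of_mem _ hw)),
      hf b h hc.1.symm (hP b (by simp)) (hP h (by simp))]
    ring
end Hex

namespace Hex

theorem R_tele' (z : ℤ × ℤ) (f : ℤ × ℤ → ℤ) (P : ℤ × ℤ → Prop)
    (hr : ∀ a b, P (a, b) → P (a + 1, b) → dd z (a, b) (a + 1, b) = f (a + 1, b) - f (a, b))
    (hu : ∀ a b, P (a, b) → P (a, b + 1) → dd z (a, b) (a, b + 1) = f (a, b + 1) - f (a, b))
    (h : ℤ × ℤ) (t : List (ℤ × ℤ)) (hc : (h :: t).IsChain U) (hP : ∀ w ∈ h :: t, P w) :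
    R z (h :: t) = f h - f ((h :: t).getLast (by simp)) := by
  refine R_tele z f P ?_ h t hc hP
  rintro ⟨u1, u2⟩ ⟨v1, v2⟩ huv pu pv
  rcases U_or huv with (h | h) | (h | h)
  · obtain ⟨rfl, rfl⟩ := Prod.mk.inj h; exact hr _ _ pu pv
  · obtain ⟨rfl, rfl⟩ := Prod.mk.inj h; exact hu _ _ pu pv
  · obtain ⟨rfl, rfl⟩ := Prod.mk.inj h
    have := hr _ _ pv pu
    rw [dd_symm _ huv] at this; linarith
  · obtain ⟨rfl, rfl⟩ := Prod.mk.inj h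
    have := hu _ _ pv pu
    rw [dd_symm _ huv] at this; linarith

/-- direction correction between brick wall and hexagonal embedding -/
def cc (p v : ℤ × ℤ) : ℤ := if (p.1 + p.2) % 2 = 0 then 2 * (p.1 - v.1) else 2 * (v.1 - p.1)

def ph : List (ℤ × ℤ) → ℤ
  | u :: v :: l => 3 * th (u :: v :: l) + cc v u
  | _ => 0

section exits
variable {u h : ℤ × ℤ} {l : List (ℤ × ℤ)}

theorem leg1 (hc : (u :: (h :: l ++ [(0, 0)])).IsChain U)
    (hl : (u :: h :: l).getLast (by simp) = (0, 1)) (hp : ∀ w ∈ h :: l, 1 ≤ w.2) (hu : 0 ≤ u.2)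
    (hu0 : u ≠ (0, 0)) :
    R (0, 0) (u :: h :: l) = if 0 < u.2 then - sg u.1 else - 2 * sg u.1 := by
  have := R_tele' (0, 0) (fun u => if 0 < u.2 then - sg u.1 else - 2 * sg u.1)
    (fun w => 0 ≤ w.2 ∧ w ≠ (0, 0)) (by
      intro a b ha hb
      simp only [dd_right, ne_eq, Prod.mk.injEq, sg] at *
      (repeat' split) <;> omega) (by
      intro a b ha hb
      simp only [dd_up, ne_eq, Prod.mk.injEq, sg] at *
      (repeat' split) <;> omega) u (h :: l) (List.IsChain.left_of_append (l₂ := [(0, 0)]) hc) (by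
      intro w hw
      rcases List.mem_cons.1 hw with rfl | hw
      · exact ⟨hu, hu0⟩
      · refine ⟨by linarith [hp w hw], ?_⟩
        rintro rfl
        have := hp _ hw
        norm_num at this)
  rw [this, hl]
  simp [sg]

theorem exit_top (hc : (u :: (h :: l ++ [(0, 0)])).IsChain U) (hn : (u :: (h :: l ++ [(0, 0)])).Nodup)
    (hl : (u :: h :: l).getLast (by simp) = (0, 1)) (hp : ∀ w ∈ h :: l, 1 ≤ w.2)
    (hu : ∀ w ∈ h :: l, w.2 < u.2) : ph (u :: (h :: l ++ [(0, 0)])) = 0 := by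
  have hh : u = (h.1, h.2 + 1) := by
    have h1 := (List.isChain_cons_cons.1 hc).1
    have h2 := hu h (by simp)
    rw [Prod.ext_iff]
    unfold U at h1; dsimp only; omega
  have H := hopf _ _ _ hc hn
  have hu1 : 0 < u.2 := by linarith [hp h (by simp), hu h (by simp)]
  rw [leg1 hc hl hp (by omega) (by rintro rfl; simp at hu1), if_pos hu1] at H
  have L2 := R_tele' u (fun w => sg (w.1 - u.1)) (fun w => w.2 < u.2) (by
      intro a b ha hb
      obtain ⟨u1, u2⟩ := u
      simp only [dd_right, sg] at *
      (repeat' split) <;> omega) (by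
      intro a b ha hb
      obtain ⟨u1, u2⟩ := u
      simp only [dd_up, sg] at *
      (repeat' split) <;> omega) h (l ++ [(0, 0)]) (List.isChain_cons_cons.1 hc).2 (by
      intro w hw
      rw [← List.cons_append, List.mem_append] at hw
      rcases hw with hw | hw
      · exact hu w hw
      · simp at hw; subst hw; exact hu1)
  rw [List.cons_append, L2] at H
  have : (h :: (l ++ [((0 : ℤ), (0 : ℤ))])).getLast (by simp) = (0, 0) := by simp
  rw [this] at H
  simp only [List.cons_append, ph, H, cc]
  subst hh
  simp only [sg]
  (repeat' split) <;> omega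

theorem exit_bot (hc : (u :: (h :: l ++ [(0, 0)])).IsChain U) (hn : (u :: (h :: l ++ [(0, 0)])).Nodup)
    (hl : (u :: h :: l).getLast (by simp) = (0, 1)) (hp : ∀ w ∈ h :: l, 1 ≤ w.2)
    (hu : u.2 = 0) : ph (u :: (h :: l ++ [(0, 0)])) = 12 ∨ ph (u :: (h :: l ++ [(0, 0)])) = -12 := by
  have hh : h = (u.1, u.2 + 1) := by
    have h1 := (List.isChain_cons_cons.1 hc).1
    have h2 := hp h (by simp)
    rw [Prod.ext_iff]
    unfold U at h1; dsimp only; omega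
  have H := hopf _ _ _ hc hn
  have hu0 : u ≠ (0, 0) := by
    rintro rfl
    simp at hn
  rw [leg1 hc hl hp (by omega) hu0, if_neg (by omega)] at H
  have L2 := R_tele' u (fun w => if 0 < w.2 then - sg (w.1 - u.1) else - 2 * sg (w.1 - u.1))
    (fun w => 0 ≤ w.2 ∧ w ≠ u) (by
      intro a b ha hb
      obtain ⟨u1, u2⟩ := u
      simp only [dd_right, sg, ne_eq, Prod.mk.injEq] at *
      (repeat' split) <;> omega) (by
      intro a b ha hb
      obtain ⟨u1, u2⟩ := u
      simp only [dd_up, sg, ne_eq, Prod.mk.injEq] at *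
      (repeat' split) <;> omega) h (l ++ [(0, 0)]) (List.isChain_cons_cons.1 hc).2 (by
      intro w hw
      rw [← List.cons_append, List.mem_append] at hw
      rcases hw with hw | hw
      · exact ⟨by linarith [hp w hw], by rintro rfl; have := hp _ hw; omega⟩
      · simp at hw; subst hw; exact ⟨le_refl _, hu0.symm⟩)
  rw [List.cons_append, L2] at H
  have : (h :: (l ++ [((0 : ℤ), (0 : ℤ))])).getLast (by simp) = (0, 0) := by simp
  rw [this] at H
  simp only [List.cons_append, ph, H, cc]
  subst hh
  obtain ⟨u1, u2⟩ := u
  simp only [sg, ne_eq, Prod.mk.injEq] at *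
  subst hu
  (repeat' split) <;> omega

theorem exit_right (hc : (u :: (h :: l ++ [(0, 0)])).IsChain U) (hn : (u :: (h :: l ++ [(0, 0)])).Nodup)
    (hl : (u :: h :: l).getLast (by simp) = (0, 1)) (hp : ∀ w ∈ h :: l, 1 ≤ w.2)
    (hu1 : 0 < u.1) (hu : ∀ w ∈ h :: l, w.1 < u.1) :
    ph (u :: (h :: l ++ [(0, 0)])) = -4 ∨ ph (u :: (h :: l ++ [(0, 0)])) = -8 := by
  have hh : u = (h.1 + 1, h.2) := by
    have h1 := (List.isChain_cons_cons.1 hc).1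
    have h2 := hu h (by simp)
    rw [Prod.ext_iff]
    unfold U at h1; dsimp only; omega
  have H := hopf _ _ _ hc hn
  have hu2 : 0 < u.2 := by rw [hh]; exact hp h (by simp)
  rw [leg1 hc hl hp (by omega) (by rintro rfl; simp at hu1), if_pos hu2] at H
  have L2 := R_tele' u (fun w => sg (u.2 - w.2)) (fun w => w.1 < u.1) (by
      intro a b ha hb
      obtain ⟨u1, u2⟩ := u
      simp only [dd_right, sg] at *
      (repeat' split) <;> omega) (by
      intro a b ha hb
      obtain ⟨u1, u2⟩ := u
      simp only [dd_up, sg] at *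
      (repeat' split) <;> omega) h (l ++ [(0, 0)]) (List.isChain_cons_cons.1 hc).2 (by
      intro w hw
      rw [← List.cons_append, List.mem_append] at hw
      rcases hw with hw | hw
      · exact hu w hw
      · simp at hw; subst hw; exact hu1)
  rw [List.cons_append, L2] at H
  have : (h :: (l ++ [((0 : ℤ), (0 : ℤ))])).getLast (by simp) = (0, 0) := by simp
  rw [this] at H
  simp only [List.cons_append, ph, H, cc]
  subst hh
  simp only [sg] at *
  (repeat' split) <;> omega

theorem exit_left (hc : (u :: (h :: l ++ [(0, 0)])).IsChain U) (hn : (u :: (h :: l ++ [(0, 0)])).Nodup)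
    (hl : (u :: h :: l).getLast (by simp) = (0, 1)) (hp : ∀ w ∈ h :: l, 1 ≤ w.2)
    (hu1 : u.1 < 0) (hu : ∀ w ∈ h :: l, u.1 < w.1) :
    ph (u :: (h :: l ++ [(0, 0)])) = 4 ∨ ph (u :: (h :: l ++ [(0, 0)])) = 8 := by
  have hh : h = (u.1 + 1, u.2) := by
    have h1 := (List.isChain_cons_cons.1 hc).1
    have h2 := hu h (by simp)
    rw [Prod.ext_iff]
    unfold U at h1; dsimp only; omega
  have H := hopf _ _ _ hc hn
  have hu2 : 0 < u.2 := by have := hp h (by simp); rw [hh] at this; exact this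
  rw [leg1 hc hl hp (by omega) (by rintro rfl; simp at hu1), if_pos hu2] at H
  have L2 := R_tele' u (fun w => - sg (u.2 - w.2)) (fun w => u.1 < w.1) (by
      intro a b ha hb
      obtain ⟨u1, u2⟩ := u
      simp only [dd_right, sg] at *
      (repeat' split) <;> omega) (by
      intro a b ha hb
      obtain ⟨u1, u2⟩ := u
      simp only [dd_up, sg] at *
      (repeat' split) <;> omega) h (l ++ [(0, 0)]) (List.isChain_cons_cons.1 hc).2 (by
      intro w hw
      rw [← List.cons_append, List.mem_append] at hw
      rcases hw with hw | hw
      · exact hu w hw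
      · simp at hw; subst hw; exact hu1)
  rw [List.cons_append, L2] at H
  have : (h :: (l ++ [((0 : ℤ), (0 : ℤ))])).getLast (by simp) = (0, 0) := by simp
  rw [this] at H
  simp only [List.cons_append, ph, H, cc]
  subst hh
  simp only [sg] at *
  (repeat' split) <;> omega
end exits
end Hex

namespace Hex

theorem dd_add (z u v w : ℤ × ℤ) : dd (z + w) (u + w) (v + w) = dd z u v := by
  simp [dd]

/-- neighbour offsets -/
def offs (b : Bool) : Finset (ℤ × ℤ) :=
  if b then {(1, 0), (-1, 0), (0, 1)} else {(1, 0), (-1, 0), (0, -1)}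

def par (v : ℤ × ℤ) : Bool := decide ((v.1 + v.2) % 2 = 0)

theorem adj_iff_offs (v u : ℤ × ℤ) : Adj v u ↔ ∃ e ∈ offs (par v), u = e + v := by
  obtain ⟨a, b⟩ := v
  obtain ⟨c, d⟩ := u
  by_cases h : (a + b) % 2 = 0
  · simp only [Adj, par, h, offs, Finset.mem_insert, Finset.mem_singleton, decide_true, if_true]
    constructor
    · intro h'
      have : (c = 1 + a ∧ d = 0 + b) ∨ (c = -1 + a ∧ d = 0 + b) ∨ (c = 0 + a ∧ d = 1 + b) := by omega
      rcases this with ⟨rfl, rfl⟩ | ⟨rfl, rfl⟩ | ⟨rfl, rfl⟩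
      exacts [⟨_, Or.inl rfl, rfl⟩, ⟨_, Or.inr (Or.inl rfl), rfl⟩, ⟨_, Or.inr (Or.inr rfl), rfl⟩]
    · rintro ⟨e, rfl | rfl | rfl, he⟩ <;> obtain ⟨rfl, rfl⟩ := Prod.mk.inj he <;> simp
      · omega
      · omega
      · omega
  · have h1 : (a + b) % 2 = 1 := by omega
    simp only [Adj, par, h, h1, offs, Finset.mem_insert, Finset.mem_singleton, decide_false]
    constructor
    · intro h'
      have : (c = 1 + a ∧ d = 0 + b) ∨ (c = -1 + a ∧ d = 0 + b) ∨ (c = 0 + a ∧ d = -1 + b) := by omega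
      rcases this with ⟨rfl, rfl⟩ | ⟨rfl, rfl⟩ | ⟨rfl, rfl⟩
      exacts [⟨(1, 0), by simp, rfl⟩, ⟨(-1, 0), by simp, rfl⟩, ⟨(0, -1), by simp, rfl⟩]
    · rintro ⟨e, he, h'⟩
      simp at he
      rcases he with rfl | rfl | rfl <;> obtain ⟨rfl, rfl⟩ := Prod.mk.inj h' <;> simp <;> omega

def cout (b : Bool) (e : ℤ × ℤ) : ℤ := if b then -2 * e.1 else 2 * e.1

theorem cc_out (v e : ℤ × ℤ) : cc v (e + v) = cout (par v) e := by
  simp only [cc, cout, par]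
  by_cases h : (v.1 + v.2) % 2 = 0 <;> simp [h]

theorem cc_in (v e : ℤ × ℤ) (h : Adj v (e + v)) : cc (e + v) v = cout (par v) e := by
  simp only [cc, cout, par, Adj] at *
  simp only [Prod.fst_add, Prod.snd_add] at *
  by_cases h2 : (v.1 + v.2) % 2 = 0
  · simp only [h2, decide_true, if_true]; split <;> omega
  · simp only [h2, decide_false]; split <;> simp <;> omega

def Th (p q r v : ℤ × ℤ) : ℤ :=
  tc p v q + 2 * (-dd p r v - dd p v q + dd r p v - dd q p v) + dd r v q + dd q r v

theorem Th_add (p q r v w : ℤ × ℤ) : Th (p + w) (q + w) (r + w) (v + w) = Th p q r v := by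
  simp [Th, tc, dd_add]

theorem Th_dec : ∀ b : Bool, ∀ p ∈ offs b, ∀ q ∈ offs b, ∀ r ∈ offs b, p ≠ q → p ≠ r → q ≠ r →
    (3 * Th p q r (0, 0) + cout b r - cout b p = 16 ∧ 3 * Th p r q (0, 0) + cout b q - cout b p = -16) ∨
    (3 * Th p q r (0, 0) + cout b r - cout b p = -16 ∧ 3 * Th p r q (0, 0) + cout b q - cout b p = 16) := by
  decide

theorem loc_dec : ∀ b : Bool, ∀ p ∈ offs b, ∃ q ∈ offs b, ∃ r ∈ offs b,
    (q ≠ p ∧ r ≠ p ∧ q ≠ r ∧ ∀ s ∈ offs b, s ≠ p → s = q ∨ s = r) ∧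
    3 * tc p (0, 0) q + cout b q - cout b p = 4 ∧ 3 * tc p (0, 0) r + cout b r - cout b p = -4 := by
  decide

theorem tc_add (p v u w : ℤ × ℤ) : tc (p + w) (v + w) (u + w) = tc p v u := by
  simp [tc, dd_add]

theorem loc (p v : ℤ × ℤ) (h : Adj v p) : ∃ q r, Adj v q ∧ Adj v r ∧ q ≠ p ∧ r ≠ p ∧ q ≠ r ∧
    (∀ s, Adj v s → s ≠ p → s = q ∨ s = r) ∧
    3 * tc p v q + cc v q - cc p v = 4 ∧ 3 * tc p v r + cc v r - cc p v = -4 := by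
  have h0 := h
  rw [adj_iff_offs] at h
  obtain ⟨e, he, rfl⟩ := h
  obtain ⟨q, hq, r, hr, ⟨h1, h2, h3, h4⟩, h5, h6⟩ := loc_dec _ e he
  have hv : v = (0, 0) + v := by simp [← Prod.zero_eq_mk]
  have ht : ∀ s, tc (e + v) v (s + v) = tc e (0, 0) s := by
    intro s; conv_lhs => rw [show tc (e + v) v (s + v) = tc (e + v) ((0, 0) + v) (s + v) by rw [← hv]]
    exact tc_add _ _ _ _
  refine ⟨q + v, r + v, (adj_iff_offs _ _).2 ⟨q, hq, rfl⟩, (adj_iff_offs _ _).2 ⟨r, hr, rfl⟩,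
    by simpa using h1, by simpa using h2, by simpa using h3, ?_, ?_, ?_⟩
  · intro s hs hne
    obtain ⟨f, hf, rfl⟩ := (adj_iff_offs _ _).1 hs
    rcases h4 f hf (by simpa using hne) with rfl | rfl <;> simp
  · rw [ht, cc_out, cc_in _ _ h0]; exact h5
  · rw [ht, cc_out, cc_in _ _ h0]; exact h6

theorem Th_loc (p q r v : ℤ × ℤ) (hp : Adj v p) (hq : Adj v q) (hr : Adj v r) (h1 : p ≠ q) (h2 : p ≠ r)
    (h3 : q ≠ r) :
    (3 * Th p q r v + cc r v - cc p v = 16 ∧ 3 * Th p r q v + cc q v - cc p v = -16) ∨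
    (3 * Th p q r v + cc r v - cc p v = -16 ∧ 3 * Th p r q v + cc q v - cc p v = 16) := by
  have hp0 := hp
  have hq0 := hq
  have hr0 := hr
  rw [adj_iff_offs] at hp hq hr
  obtain ⟨p, hp, rfl⟩ := hp
  obtain ⟨q, hq, rfl⟩ := hq
  obtain ⟨r, hr, rfl⟩ := hr
  have hv : v = (0, 0) + v := by simp [← Prod.zero_eq_mk]
  have ht : ∀ p q r, Th (p + v) (q + v) (r + v) v = Th p q r (0, 0) := by
    intro p q r
    conv_lhs => rw [show Th (p + v) (q + v) (r + v) v = Th (p + v) (q + v) (r + v) ((0, 0) + v) by rw [← hv]]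
    exact Th_add _ _ _ _ _
  rw [ht, ht, cc_in _ _ hp0, cc_in _ _ hq0, cc_in _ _ hr0]
  exact Th_dec _ p hp q hq r hr (by simpa using h1) (by simpa using h2) (by simpa using h3)

theorem chain_U {l : List (ℤ × ℤ)} (h : l.IsChain Adj) : l.IsChain U := h.imp fun _ _ => Adj.U

/-- the turning of a walk closing a loop at `v` -/
theorem loop_th (v r q p : ℤ × ℤ) (l t : List (ℤ × ℤ))
    (hc : (v :: (r :: (l ++ [q]) ++ v :: p :: t)).IsChain U)
    (hn : (r :: (l ++ [q]) ++ v :: p :: t).Nodup)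
    (hl : (p :: t).getLast (by simp) = (0, 0)) (hp : ∀ w ∈ r :: (l ++ [q]) ++ [v], 1 ≤ w.2) :
    th (v :: (r :: (l ++ [q]) ++ v :: p :: t)) = th (v :: p :: t) + Th p q r v := by
  have e1 : v :: (r :: (l ++ [q]) ++ v :: p :: t) = (v :: (r :: (l ++ [q]) ++ [v])) ++ (p :: t) := by simp
  have hc1 : (v :: (r :: (l ++ [q]) ++ [v])).IsChain U := by
    rw [e1] at hc; exact hc.left_of_append
  have e2 : r :: (l ++ [q]) ++ v :: p :: t = (r :: (l ++ [q]) ++ [v]) ++ (p :: t) := by simp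
  have hn1 : (r :: (l ++ [q]) ++ [v]).Nodup := by
    rw [e2] at hn; exact (List.nodup_append.1 hn).1
  have hct : (p :: t).IsChain U := by
    rw [e1] at hc; exact hc.right_of_append
  have hd : ∀ w ∈ p :: t, w ∉ v :: (r :: (l ++ [q]) ++ [v]) := by
    intro w hw hw'
    rw [e2] at hn
    have hw'' : w ∈ r :: (l ++ [q]) ++ [v] := by
      rcases List.mem_cons.1 hw' with rfl | h
      · simp
      · exact h
    exact (List.nodup_append.1 hn).2.2 w hw'' w hw rfl
  have C := closed_turn v r q l hc1 hn1
  have K := R_closed_const v _ hc1 (by simp) p t hct hd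
  rw [hl] at K
  have K0 : R (0, 0) (v :: (r :: (l ++ [q]) ++ [v])) = 0 := by
    rw [R_tele' (0, 0) (fun w => - sg w.1) (fun w => 1 ≤ w.2) ?_ ?_ v _ hc1 ?_]
    · simp
    · intro a b ha hb
      simp only [dd_right, sg] at *
      (repeat' split) <;> omega
    · intro a b ha hb
      simp only [dd_up, sg] at *
      (repeat' split) <;> omega
    · intro w hw
      rcases List.mem_cons.1 hw with rfl | h
      · exact hp _ (by simp)
      · exact hp _ h
  rw [K0] at K
  have K1 : R p (v :: (r :: (l ++ [q]) ++ [v])) = dd p r v + (R p (r :: (l ++ [q])) + dd p v q) := by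
    have := R_append p v (r :: l) q
    simp only [List.cons_append, R_cons, List.append_assoc, List.nil_append] at this ⊢
    rw [this]
  have hpv : U p v := by
    have : (v :: p :: t).IsChain U := by
      have e3 : v :: (r :: (l ++ [q]) ++ v :: p :: t) = (v :: (r :: (l ++ [q]))) ++ (v :: p :: t) := by simp
      rw [e3] at hc; exact hc.right_of_append
    exact (List.isChain_cons_cons.1 this).1.symm
  have B := base_change hpv r (l ++ [q]) (hc1.tail.left_of_append)
    (fun k => hd p (by simp) (List.mem_cons_of_mem _ (List.mem_append_left _ k)))
    (fun k => (List.nodup_append.1 hn1).2.2 v k v (by simp) rfl)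
  have hlast : (r :: (l ++ [q])).getLast (by simp) = q := by simp
  rw [hlast] at B
  have e4 : v :: (r :: (l ++ [q]) ++ v :: p :: t) = (v :: r :: l) ++ q :: v :: (p :: t) := by simp
  have e5 : v :: (r :: (l ++ [q]) ++ [v]) = (v :: r :: l) ++ [q, v] := by simp
  rw [e4, th_append, ← e5, C]
  have : th (q :: v :: p :: t) = tc p v q + th (v :: p :: t) := rfl
  rw [this]
  unfold Th
  linarith

theorem ph_loop (v r q p : ℤ × ℤ) (l t : List (ℤ × ℤ))
    (hc : (v :: (r :: (l ++ [q]) ++ v :: p :: t)).IsChain U)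
    (hn : (r :: (l ++ [q]) ++ v :: p :: t).Nodup)
    (hl : (p :: t).getLast (by simp) = (0, 0)) (hp : ∀ w ∈ r :: (l ++ [q]) ++ [v], 1 ≤ w.2) :
    ph (v :: (r :: (l ++ [q]) ++ v :: p :: t)) = ph (v :: p :: t) + (3 * Th p q r v + cc r v - cc p v) := by
  have := loop_th v r q p l t hc hn hl hp
  simp only [List.cons_append, ph] at *
  rw [this]; ring
end Hex

namespace Hex
open Classical in
noncomputable def nbr (v : ℤ × ℤ) : Finset (ℤ × ℤ) := (offs (par v)).image (fun e => e + v)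

theorem mem_nbr {v u : ℤ × ℤ} : u ∈ nbr v ↔ Adj v u := by
  rw [adj_iff_offs]; simp only [nbr, Finset.mem_image, eq_comm]

open Classical in
/-- self-avoiding walks from `v` with `n` steps, tip first -/
noncomputable def W (v : ℤ × ℤ) : ℕ → Finset (List (ℤ × ℤ))
  | 0 => {[v]}
  | n + 1 => (W v n).biUnion fun l => ((nbr (l.headD v)).filter (fun u => u ∉ l)).image (fun u => u :: l)

theorem mem_W {v : ℤ × ℤ} {n : ℕ} {l : List (ℤ × ℤ)} :
    l ∈ W v n ↔ l.length = n + 1 ∧ l.Nodup ∧ l.IsChain Adj ∧ l.getLast? = some v := by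
  induction n generalizing l with
  | zero =>
    simp only [W, Finset.mem_singleton]
    constructor
    · rintro rfl; simp
    · rintro ⟨h1, -, -, h2⟩
      obtain ⟨a, rfl⟩ := List.length_eq_one_iff.1 h1
      simpa using h2
  | succ n ih =>
    simp only [W, Finset.mem_biUnion, Finset.mem_image, Finset.mem_filter, ih, mem_nbr]
    constructor
    · rintro ⟨l', ⟨h1, h2, h3, h4⟩, u, ⟨h5, h6⟩, rfl⟩
      match l', h1 with
      | b :: t, h1 =>
        refine ⟨by simpa using h1, List.nodup_cons.2 ⟨h6, h2⟩, List.isChain_cons_cons.2 ⟨h5.symm, h3⟩, ?_⟩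
        rw [List.getLast?_cons_cons]; exact h4
    · rintro ⟨h1, h2, h3, h4⟩
      match l, h1 with
      | u :: b :: t, h1 =>
        refine ⟨b :: t, ⟨by simpa using h1, (List.nodup_cons.1 h2).2, (List.isChain_cons_cons.1 h3).2, ?_⟩, u,
          ⟨(List.isChain_cons_cons.1 h3).1.symm, (List.nodup_cons.1 h2).1⟩, rfl⟩
        rw [List.getLast?_cons_cons] at h4; exact h4

open Classical in
/-- walks in the domain `D` started through the edge from `(0,0)` -/
noncomputable def LL (D : Set (ℤ × ℤ)) (n : ℕ) : Finset (List (ℤ × ℤ)) :=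
  (W (0, 0) (n + 1)).filter (fun l => ∀ w ∈ l, w = (0, 0) ∨ w ∈ D)

theorem mem_LL {D : Set (ℤ × ℤ)} (hD : ∀ w ∈ D, 1 ≤ w.2) {n : ℕ} {l : List (ℤ × ℤ)} :
    l ∈ LL D n ↔ ∃ h t, l = h :: (t ++ [(0, 0)]) ∧ l.IsChain Adj ∧ (h :: t).Nodup ∧
      (h :: t).getLast (by simp) = (0, 1) ∧ (∀ w ∈ h :: t, w ∈ D) ∧ t.length = n := by
  simp only [LL, Finset.mem_filter, mem_W]
  constructor
  · rintro ⟨⟨h1, h2, h3, h4⟩, h5⟩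
    obtain ⟨l', rfl⟩ : ∃ l', l = l' ++ [(0, 0)] := List.getLast?_eq_some_iff.1 h4
    match l', h1 with
    | h :: t, h1 =>
      have hn := List.nodup_append.1 h2
      have hd : ∀ w ∈ h :: t, w ∈ D := by
        intro w hw
        rcases h5 w (List.mem_append_left _ hw) with h | h
        · exact absurd h (hn.2.2 w hw _ (by simp))
        · exact h
      refine ⟨h, t, rfl, h3, hn.1, ?_, hd, by simpa using h1⟩
      have hg : (h :: t).getLast (by simp) ∈ h :: t := List.getLast_mem _
      have h7 := hD _ (hd _ hg)
      have : Adj ((h :: t).getLast (by simp)) (0, 0) := by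
        have h8 := List.isChain_append.1 h3
        exact h8.2.2 _ (by simp [List.getLast?_eq_getLast_of_ne_nil]) _ (by simp)
      rw [Prod.ext_iff]
      unfold Adj at this
      dsimp only at *
      omega
  · rintro ⟨h, t, rfl, h3, h4, h5, h6, h7⟩
    refine ⟨⟨by simpa using h7, ?_, h3, ?_⟩, ?_⟩
    · rw [← List.cons_append, List.nodup_append]
      refine ⟨h4, by simp, ?_⟩
      intro a ha b hb
      simp at hb; subst hb
      rintro rfl
      have := hD _ (h6 _ ha)
      simp at this
    · rw [← List.cons_append]; exact List.getLast?_concat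
    · intro w hw
      rw [← List.cons_append, List.mem_append] at hw
      rcases hw with hw | hw
      · exact Or.inr (h6 w hw)
      · left; simpa using hw

open Classical in
noncomputable def nx : List (ℤ × ℤ) → Finset (ℤ × ℤ)
  | v :: p :: _ => (nbr v).erase p
  | _ => ∅

open Classical in
noncomputable def MM (D : Set (ℤ × ℤ)) (n : ℕ) : Finset (List (ℤ × ℤ)) :=
  (LL D n).biUnion (fun l => (nx l).image (fun u => u :: l))

theorem mem_MM {D : Set (ℤ × ℤ)} {n : ℕ} {m : List (ℤ × ℤ)} :
    m ∈ MM D n ↔ ∃ u l, m = u :: l ∧ l ∈ LL D n ∧ u ∈ nx l := by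
  simp only [MM, Finset.mem_biUnion, Finset.mem_image]
  constructor
  · rintro ⟨l, hl, u, hu, rfl⟩; exact ⟨u, l, rfl, hl, hu⟩
  · rintro ⟨u, l, rfl, hl, hu⟩; exact ⟨l, hl, u, hu, rfl⟩

theorem sum_MM (D : Set (ℤ × ℤ)) (n : ℕ) (f : List (ℤ × ℤ) → ℝ) :
    ∑ m ∈ MM D n, f m = ∑ l ∈ LL D n, ∑ u ∈ nx l, f (u :: l) := by
  classical
  unfold MM
  rw [Finset.sum_biUnion]
  · refine Finset.sum_congr rfl fun l _ => ?_
    rw [Finset.sum_image]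
    intro a _ b _ h
    exact (List.cons.inj h).1
  · intro l _ l' _ hne
    rw [Function.onFun, Finset.disjoint_left]
    intro m hm hm'
    simp only [Finset.mem_image] at hm hm'
    obtain ⟨u, -, rfl⟩ := hm
    obtain ⟨u', -, h⟩ := hm'
    exact hne (List.cons.inj h).2.symm

noncomputable def E (k : ℤ) : ℝ := Real.cos (Real.pi * k / 32)

theorem ph_cons (u v p : ℤ × ℤ) (t : List (ℤ × ℤ)) :
    ph (u :: v :: p :: t) = ph (v :: p :: t) + (3 * tc p v u + cc v u - cc p v) := by
  simp only [ph, th]; ring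

theorem sum_nx (v p : ℤ × ℤ) (t : List (ℤ × ℤ)) (h : Adj v p) :
    ∑ u ∈ nx (v :: p :: t), E (ph (u :: v :: p :: t)) = 2 * Real.cos (Real.pi / 8) * E (ph (v :: p :: t)) := by
  classical
  obtain ⟨q, r, hq, hr, h1, h2, h3, h4, h5, h6⟩ := loc p v h
  have : nx (v :: p :: t) = {q, r} := by
    ext s
    simp only [nx, Finset.mem_erase, mem_nbr, Finset.mem_insert, Finset.mem_singleton]
    constructor
    · rintro ⟨a, b⟩; exact h4 s b a
    · rintro (rfl | rfl)
      · exact ⟨h1, hq⟩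
      · exact ⟨h2, hr⟩
  rw [this, Finset.sum_pair h3, ph_cons, ph_cons, h5, h6]
  unfold E
  push_cast
  have e1 : Real.pi * ((ph (v :: p :: t) : ℝ) + 4) / 32 = Real.pi * (ph (v :: p :: t)) / 32 + Real.pi / 8 := by ring
  have e2 : Real.pi * ((ph (v :: p :: t) : ℝ) + -4) / 32 = Real.pi * (ph (v :: p :: t)) / 32 - Real.pi / 8 := by ring
  rw [e1, e2, Real.cos_add, Real.cos_sub]; ring

theorem sum_MM_E {D : Set (ℤ × ℤ)} (hD : ∀ w ∈ D, 1 ≤ w.2) (n : ℕ) :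
    ∑ m ∈ MM D n, E (ph m) = 2 * Real.cos (Real.pi / 8) * ∑ l ∈ LL D n, E (ph l) := by
  rw [sum_MM, Finset.mul_sum]
  refine Finset.sum_congr rfl fun l hl => ?_
  obtain ⟨h, t, rfl, hc, -⟩ := (mem_LL hD).1 hl
  cases t with
  | nil => exact sum_nx _ _ _ (List.isChain_cons_cons.1 hc).1
  | cons b t => exact sum_nx _ _ _ (List.isChain_cons_cons.1 hc).1

open Classical in
noncomputable def Ex (D : Set (ℤ × ℤ)) (n : ℕ) : Finset (List (ℤ × ℤ)) :=
  (MM D n).filter (fun m => m.headD (0, 0) ∉ D)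

theorem mem_Ex {D : Set (ℤ × ℤ)} (hD : ∀ w ∈ D, 1 ≤ w.2) {n : ℕ} {m : List (ℤ × ℤ)} :
    m ∈ Ex D n ↔ ∃ u h t, m = u :: (h :: t ++ [(0, 0)]) ∧ m.IsChain Adj ∧ m.Nodup ∧
      (u :: h :: t).getLast (by simp) = (0, 1) ∧ (∀ w ∈ h :: t, w ∈ D) ∧ u ∉ D ∧ t.length = n := by
  simp only [Ex, Finset.mem_filter, mem_MM]
  constructor
  · rintro ⟨⟨u, l, rfl, hl, hu⟩, hx⟩
    have hl' := hl
    simp only [LL, Finset.mem_filter, mem_W] at hl'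
    obtain ⟨h, t, rfl, hc, hn, hlast, hd, hlen⟩ := (mem_LL hD).1 hl
    have hadj : Adj h u ∧ ∀ p l', t ++ [(0, 0)] = p :: l' → u ≠ p := by
      cases t with
      | nil =>
        simp only [nx, List.nil_append, Finset.mem_erase, mem_nbr] at hu
        refine ⟨hu.2, ?_⟩
        rintro p l' h; simp at h; rw [← h.1]; exact hu.1
      | cons b t =>
        simp only [nx, List.cons_append, Finset.mem_erase, mem_nbr] at hu
        refine ⟨hu.2, ?_⟩
        rintro p l' h; simp at h; rw [← h.1]; exact hu.1
    refine ⟨u, h, t, rfl, List.isChain_cons_cons.2 ⟨hadj.1.symm, hc⟩, ?_, by simpa using hlast, hd, hx, hlen⟩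
    refine List.nodup_cons.2 ⟨?_, hl'.1.2.1⟩
    intro hmem
    rw [← List.cons_append, List.mem_append] at hmem
    rcases hmem with hmem | hmem
    · exact hx (hd _ hmem)
    · simp only [List.mem_singleton] at hmem
      subst hmem
      have h1 := hD h (hd _ (by simp))
      have h2 : h = (0, 1) := by
        have := hadj.1
        unfold Adj at this
        rw [Prod.ext_iff]; dsimp only at *; omega
      subst h2
      cases t with
      | nil => exact hadj.2 _ _ rfl rfl
      | cons b t =>
        rw [List.getLast_cons (by simp)] at hlast
        exact (List.nodup_cons.1 hn).1 (hlast ▸ List.getLast_mem _)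
  · rintro ⟨u, h, t, rfl, hc, hn, hlast, hd, hu, hlen⟩
    refine ⟨⟨u, h :: t ++ [(0, 0)], rfl, ?_, ?_⟩, hu⟩
    · rw [mem_LL hD]
      refine ⟨h, t, rfl, hc.tail, ?_, by simpa using hlast, hd, hlen⟩
      exact (List.nodup_append.1 (List.nodup_cons.1 hn).2).1
    · have h1 := (List.isChain_cons_cons.1 hc).1.symm
      cases t with
      | nil =>
        simp only [nx, List.nil_append, List.cons_append, Finset.mem_erase, mem_nbr]
        simp at hn
        exact ⟨hn.1.2, h1⟩
      | cons b t =>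
        simp only [nx, List.cons_append, Finset.mem_erase, mem_nbr]
        simp at hn
        exact ⟨hn.1.2.1, h1⟩
end Hex

namespace Hex

theorem last_eq {α : Type*} {a b : α} {l : List α} (h : (a :: l).getLast? = some b) :
    (a :: l).getLast (by simp) = b := by
  rw [List.getLast?_eq_getLast_of_ne_nil (by simp)] at h; exact Option.some.inj h

/-- data of a walk that closes a loop at its tip -/
def IsLp (D : Set (ℤ × ℤ)) (n : ℕ) (m : List (ℤ × ℤ)) (v r q p : ℤ × ℤ) (l t : List (ℤ × ℤ)) : Prop :=
  m = v :: (r :: (l ++ [q]) ++ v :: p :: t) ∧ m.IsChain Adj ∧ (r :: (l ++ [q]) ++ v :: p :: t).Nodup ∧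
    (p :: t).getLast? = some (0, 0) ∧ (∀ w ∈ (r :: (l ++ [q]) ++ v :: p :: t), w = (0, 0) ∨ w ∈ D) ∧ v ∈ D ∧
    (r :: (l ++ [q]) ++ v :: p :: t).length = n + 2

open Classical in
noncomputable def Lp (D : Set (ℤ × ℤ)) (n : ℕ) : Finset (List (ℤ × ℤ)) :=
  (MM D n).filter (fun m => m.headD (0, 0) ∈ D ∧ ¬ m.Nodup)

theorem mem_Lp {D : Set (ℤ × ℤ)} (hD : ∀ w ∈ D, 1 ≤ w.2) {n : ℕ} {m : List (ℤ × ℤ)} :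
    m ∈ Lp D n ↔ ∃ v r q p l t, IsLp D n m v r q p l t := by
  simp only [Lp, Finset.mem_filter, mem_MM]
  constructor
  · rintro ⟨⟨v, l, rfl, hl, hu⟩, hx, hnd⟩
    simp only [LL, Finset.mem_filter, mem_W] at hl
    obtain ⟨⟨hlen, hn, hc, hlast⟩, hd⟩ := hl
    simp only [List.headD_cons] at hx
    have hvl : v ∈ l := by
      by_contra h
      exact hnd (List.nodup_cons.2 ⟨h, hn⟩)
    obtain ⟨s, t', rfl⟩ := List.append_of_mem hvl
    have hv0 : v ≠ (0, 0) := by rintro rfl; have := hD _ hx; simp at this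
    match t' with
    | [] =>
      simp at hlast; exact absurd hlast hv0
    | p :: t =>
      have hadj : ∀ a b l', s ++ v :: p :: t = a :: b :: l' → Adj a v ∧ v ≠ b := by
        intro a b l' h
        rw [h] at hu
        simp only [nx, Finset.mem_erase, mem_nbr] at hu
        exact ⟨hu.2, hu.1⟩
      match s with
      | [] => exact absurd rfl (hadj v p t rfl).1.ne
      | [a] => exact absurd rfl (hadj a v (p :: t) rfl).2
      | r :: b :: s =>
        have hs : b :: s = (b :: s).dropLast ++ [(b :: s).getLast (by simp)] := (List.dropLast_append_getLast _).symm
        refine ⟨v, r, (b :: s).getLast (by simp), p, (b :: s).dropLast, t, ?_⟩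
        unfold IsLp
        rw [← hs]
        refine ⟨rfl, List.isChain_cons_cons.2 ⟨(hadj r b _ rfl).1.symm, hc⟩, hn, ?_, hd, hx, hlen⟩
        rw [List.getLast?_append, List.getLast?_cons_cons] at hlast
        simpa using hlast
  · rintro ⟨v, r, q, p, l, t, rfl, hc, hn, hlast, hd, hx, hlen⟩
    refine ⟨⟨v, _, rfl, ?_, ?_⟩, hx, ?_⟩
    · simp only [LL, Finset.mem_filter, mem_W]
      refine ⟨⟨hlen, hn, hc.tail, ?_⟩, hd⟩
      rw [List.getLast?_append, List.getLast?_cons_cons, hlast]; rfl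
    · have h1 := (List.isChain_cons_cons.1 hc).1.symm
      cases l with
      | nil =>
        simp only [nx, List.nil_append, List.cons_append, Finset.mem_erase, mem_nbr]
        refine ⟨?_, h1⟩
        rintro rfl; simp at hn
      | cons b l =>
        simp only [nx, List.cons_append, Finset.mem_erase, mem_nbr]
        refine ⟨?_, h1⟩
        rintro rfl; simp at hn
    · simp

theorem IsLp.rev {D : Set (ℤ × ℤ)} {n : ℕ} {m : List (ℤ × ℤ)} {v r q p : ℤ × ℤ} {l t : List (ℤ × ℤ)}
    (h : IsLp D n m v r q p l t) :
    IsLp D n (v :: (q :: (l.reverse ++ [r]) ++ v :: p :: t)) v q r p l.reverse t := by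
  obtain ⟨rfl, hc, hn, hlast, hd, hx, hlen⟩ := h
  have hperm : (q :: (l.reverse ++ [r]) ++ v :: p :: t).Perm (r :: (l ++ [q]) ++ v :: p :: t) := by
    apply List.Perm.append_right
    have : q :: (l.reverse ++ [r]) = (r :: (l ++ [q])).reverse := by simp
    rw [this]; exact List.reverse_perm _
  refine ⟨rfl, ?_, hperm.nodup_iff.2 hn, hlast, ?_, hx, ?_⟩
  · rw [← List.cons_append, List.isChain_split] at hc ⊢
    refine ⟨?_, hc.2⟩
    have h2 := hc.1
    rw [← List.isChain_reverse] at h2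
    have e : (v :: q :: (l.reverse ++ [r]) ++ [v]) = ((v :: r :: (l ++ [q]) ++ [v])).reverse := by simp
    rw [e]
    refine h2.imp ?_
    intro a b hab; exact hab.symm
  · intro w hw; exact hd w (hperm.mem_iff.1 hw)
  · rw [hperm.length_eq, hlen]

theorem IsLp.sum {D : Set (ℤ × ℤ)} (hD : ∀ w ∈ D, 1 ≤ w.2) {n : ℕ} {m : List (ℤ × ℤ)} {v r q p : ℤ × ℤ} {l t : List (ℤ × ℤ)}
    (h : IsLp D n m v r q p l t) :
    E (ph m) + E (ph (v :: (q :: (l.reverse ++ [r]) ++ v :: p :: t))) = 0 := by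
  have h' := h.rev
  have key : ∀ {m r q l}, IsLp D n m v r q p l t →
      ph m = ph (v :: p :: t) + (3 * Th p q r v + cc r v - cc p v) := by
    rintro m r q l ⟨rfl, hc, hn, hlast, hd, hx, hlen⟩
    refine ph_loop v r q p l t (hc.imp fun _ _ h => h.U) hn (last_eq hlast) ?_
    intro w hw
    have hw' : w ∈ r :: (l ++ [q]) ++ v :: p :: t := by
      simp only [List.mem_append, List.mem_cons] at hw ⊢; tauto
    rcases hd w hw' with rfl | h
    · exfalso
      have : (0, 0) ∈ p :: t := by
        exact List.mem_of_getLast? hlast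
      have e : r :: (l ++ [q]) ++ v :: p :: t = (r :: (l ++ [q]) ++ [v]) ++ p :: t := by simp
      rw [e] at hn
      exact (List.nodup_append.1 hn).2.2 _ hw _ this rfl
    · exact hD w h
  rw [key h, key h']
  obtain ⟨rfl, hc, hn, hlast, hd, hx, hlen⟩ := h
  have hp : Adj v p := by
    rw [← List.cons_append, List.isChain_split] at hc
    exact (List.isChain_cons_cons.1 hc.2).1
  have hr : Adj v r := (List.isChain_cons_cons.1 hc).1
  have hq : Adj v q := by
    have hc' := h'.2.1
    exact (List.isChain_cons_cons.1 hc').1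
  have hpq : p ≠ q := by rintro rfl; simp [List.nodup_append] at hn
  have hpr : p ≠ r := by rintro rfl; simp [List.nodup_append] at hn
  have hqr : q ≠ r := by rintro rfl; simp [List.nodup_append] at hn
  have e1 : ∀ k : ℤ, E (k + 16) + E (k + -16) = 0 := by
    intro k
    unfold E
    push_cast
    have e1 : Real.pi * ((k : ℝ) + 16) / 32 = Real.pi * k / 32 + Real.pi / 2 := by ring
    have e2 : Real.pi * ((k : ℝ) + -16) / 32 = Real.pi * k / 32 - Real.pi / 2 := by ring
    rw [e1, e2, Real.cos_add_pi_div_two, Real.cos_sub_pi_div_two]; ring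
  rcases Th_loc p q r v hp hq hr hpq hpr hqr with ⟨a, b⟩ | ⟨a, b⟩
  · rw [a, b]; exact e1 _
  · rw [a, b, add_comm]; exact e1 _

open Classical in
noncomputable def flip : List (ℤ × ℤ) → List (ℤ × ℤ)
  | [] => []
  | v :: l => v :: ((l.takeWhile (· ≠ v)).reverse ++ l.dropWhile (· ≠ v))

theorem IsLp.flip {D : Set (ℤ × ℤ)} {n : ℕ} {m : List (ℤ × ℤ)} {v r q p : ℤ × ℤ} {l t : List (ℤ × ℤ)}
    (h : IsLp D n m v r q p l t) : flip m = v :: (q :: (l.reverse ++ [r]) ++ v :: p :: t) := by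
  obtain ⟨rfl, hc, hn, hlast, hd, hx, hlen⟩ := h
  have hv : ∀ w ∈ r :: (l ++ [q]), decide (w ≠ v) = true := by
    intro w hw
    simp only [decide_eq_true_eq]
    exact (List.nodup_append.1 hn).2.2 w hw v (by simp)
  simp only [Hex.flip]
  rw [List.takeWhile_append_of_pos (by convert hv), List.dropWhile_append_of_pos (by convert hv)]
  simp

theorem sum_Lp {D : Set (ℤ × ℤ)} (hD : ∀ w ∈ D, 1 ≤ w.2) (n : ℕ) : ∑ m ∈ Lp D n, E (ph m) = 0 := by
  refine Finset.sum_involution (fun m _ => flip m) ?_ ?_ ?_ ?_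
  · intro m hm
    obtain ⟨v, r, q, p, l, t, h⟩ := (mem_Lp hD).1 hm
    rw [h.flip]; exact h.sum hD
  · intro m hm hne he
    obtain ⟨v, r, q, p, l, t, h⟩ := (mem_Lp hD).1 hm
    have := h.sum hD
    rw [← h.flip, he] at this
    exact hne (by linarith)
  · intro m hm
    obtain ⟨v, r, q, p, l, t, h⟩ := (mem_Lp hD).1 hm
    rw [h.flip]; exact (mem_Lp hD).2 ⟨_, _, _, _, _, _, h.rev⟩
  · intro m hm
    obtain ⟨v, r, q, p, l, t, h⟩ := (mem_Lp hD).1 hm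
    rw [h.flip, h.rev.flip, h.1]; simp

theorem LL_succ {D : Set (ℤ × ℤ)} (hD : ∀ w ∈ D, 1 ≤ w.2) {n : ℕ} {m : List (ℤ × ℤ)} :
    m ∈ LL D (n + 1) ↔ m ∈ MM D n ∧ m.headD (0, 0) ∈ D ∧ m.Nodup := by
  rw [mem_MM]
  constructor
  · intro hm
    obtain ⟨h, t, rfl, hc, hn, hlast, hd, hlen⟩ := (mem_LL hD).1 hm
    have hnd : (h :: (t ++ [(0, 0)])).Nodup := by
      simp only [LL, Finset.mem_filter, mem_W] at hm; exact hm.1.2.1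
    refine ⟨⟨h, _, rfl, ?_, ?_⟩, hd _ (by simp), hnd⟩
    · match t, hlen with
      | b :: t, hlen =>
      rw [mem_LL hD]
      exact ⟨b, t, rfl, hc.tail, (List.nodup_cons.1 hn).2, by simpa using hlast,
        fun w hw => hd w (List.mem_cons_of_mem _ hw), by simpa using hlen⟩
    · have h1 := (List.isChain_cons.1 hc).1
      match t, hlen with
      | [b], hlen =>
        simp only [nx, List.nil_append, List.cons_append, Finset.mem_erase, mem_nbr]
        simp at hnd
        exact ⟨hnd.1.2, (List.isChain_cons_cons.1 hc).1.symm⟩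
      | b :: c :: t, hlen =>
        simp only [nx, List.cons_append, Finset.mem_erase, mem_nbr]
        simp at hnd
        exact ⟨hnd.1.2.1, (List.isChain_cons_cons.1 hc).1.symm⟩
  · rintro ⟨⟨u, l, rfl, hl, hu⟩, hx, hn⟩
    simp only [List.headD_cons] at hx
    simp only [LL, Finset.mem_filter, mem_W] at hl ⊢
    obtain ⟨⟨h1, h2, h3, h4⟩, h5⟩ := hl
    refine ⟨⟨by simpa using h1, hn, ?_, ?_⟩, ?_⟩
    · match l, h1 with
      | a :: b :: l, h1 =>
        simp only [nx, Finset.mem_erase, mem_nbr] at hu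
        exact List.isChain_cons_cons.2 ⟨hu.2.symm, h3⟩
    · match l, h1 with
      | a :: b :: l, h1 =>
        rw [List.getLast?_cons_cons]; exact h4
    · intro w hw
      rcases List.mem_cons.1 hw with rfl | hw
      · exact Or.inr hx
      · exact h5 w hw

theorem step_id {D : Set (ℤ × ℤ)} (hD : ∀ w ∈ D, 1 ≤ w.2) (n : ℕ) :
    2 * Real.cos (Real.pi / 8) * ∑ l ∈ LL D n, E (ph l)
      = ∑ m ∈ Ex D n, E (ph m) + ∑ l ∈ LL D (n + 1), E (ph l) := by
  classical
  rw [← sum_MM_E hD]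
  have e1 : LL D (n + 1) = (MM D n).filter (fun m => m.headD (0, 0) ∈ D ∧ m.Nodup) := by
    ext m; rw [LL_succ hD, Finset.mem_filter]
  have h0 := sum_Lp hD n
  rw [e1]
  unfold Ex
  unfold Lp at h0
  rw [← add_zero (∑ m ∈ _, E (ph m)  + _), ← h0, Finset.sum_filter, Finset.sum_filter, Finset.sum_filter,
    ← Finset.sum_add_distrib, ← Finset.sum_add_distrib]
  refine Finset.sum_congr rfl fun m _ => ?_
  by_cases h1 : m.headD (0, 0) ∈ D <;> by_cases h2 : m.Nodup <;> simp only [h1, h2, not_true_eq_false, not_false_eq_true, and_true, and_false, if_true, if_false] <;> ring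

noncomputable def xc : ℝ := 1 / (2 * Real.cos (Real.pi / 8))

theorem cos8 : 0 < Real.cos (Real.pi / 8) := 
  Real.cos_pos_of_mem_Ioo ⟨by linarith [Real.pi_pos], by linarith [Real.pi_pos]⟩

theorem xc_pos : 0 < xc := by have := cos8; unfold xc; positivity

theorem xc_inv : 1 / xc = Real.sqrt (2 + Real.sqrt 2) := by
  unfold xc; rw [Real.cos_pi_div_eight]; simp only [one_div, inv_inv]; ring

theorem xc_mul : xc * (2 * Real.cos (Real.pi / 8)) = 1 := by
  have := cos8; unfold xc; field_simp

theorem LL_zero {D : Set (ℤ × ℤ)} (hD : ∀ w ∈ D, 1 ≤ w.2) (h1 : (0, 1) ∈ D) : LL D 0 = {[(0, 1), (0, 0)]} := by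
  ext l
  rw [mem_LL hD, Finset.mem_singleton]
  constructor
  · rintro ⟨h, t, rfl, -, -, h3, -, h4⟩
    simp at h4; subst h4; simp at h3; simp [h3]
  · rintro rfl
    exact ⟨(0, 1), [], rfl, by simp [Adj], by simp, by simp, by simpa using h1, rfl⟩

theorem obs_id {D : Set (ℤ × ℤ)} (hD : ∀ w ∈ D, 1 ≤ w.2) (h1 : (0, 1) ∈ D) (N : ℕ) :
    1 = ∑ k ∈ Finset.range N, xc ^ (k + 1) * ∑ m ∈ Ex D k, E (ph m) + xc ^ N * ∑ l ∈ LL D N, E (ph l) := by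
  induction N with
  | zero => 
    rw [LL_zero hD h1]
    simp [ph, th, cc, E]
  | succ N ih =>
    rw [Finset.sum_range_succ]
    have := step_id hD N
    have h2 := xc_mul
    have h3 : xc ^ N * ∑ l ∈ LL D N, E (ph l) = xc ^ (N + 1) * (2 * Real.cos (Real.pi / 8) * ∑ l ∈ LL D N, E (ph l)) := by
      rw [pow_succ]; linear_combination (- xc ^ N * ∑ l ∈ LL D N, E (ph l)) * h2
    rw [h3, this] at ih
    linear_combination ih
end Hex

namespace Hex

def half : Set (ℤ × ℤ) := {w | 1 ≤ w.2}
def strip (T : ℕ) : Set (ℤ × ℤ) := {w | 1 ≤ w.2 ∧ w.2 ≤ T}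
def rect (T L : ℕ) : Set (ℤ × ℤ) := {w | (1 ≤ w.2 ∧ w.2 ≤ T) ∧ (-(L : ℤ) ≤ w.1 ∧ w.1 ≤ L)}

theorem half_pos : ∀ w ∈ half, 1 ≤ w.2 := fun _ h => h
theorem strip_pos (T : ℕ) : ∀ w ∈ strip T, 1 ≤ w.2 := fun _ h => h.1
theorem rect_pos (T L : ℕ) : ∀ w ∈ rect T L, 1 ≤ w.2 := fun _ h => h.1.1

/-- exits from `D` through row `r` -/
noncomputable def Er (D : Set (ℤ × ℤ)) (r : ℤ) (n : ℕ) : Finset (List (ℤ × ℤ)) :=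
  (Ex D n).filter (fun m => (m.headD (0, 0)).2 = r)

theorem mem_Er {D : Set (ℤ × ℤ)} (hD : ∀ w ∈ D, 1 ≤ w.2) {r : ℤ} {n : ℕ} {m : List (ℤ × ℤ)} :
    m ∈ Er D r n ↔ ∃ u h t, m = u :: (h :: t ++ [(0, 0)]) ∧ m.IsChain Adj ∧ m.Nodup ∧
      (u :: h :: t).getLast (by simp) = (0, 1) ∧ (∀ w ∈ h :: t, w ∈ D) ∧ u ∉ D ∧ t.length = n ∧ u.2 = r := by
  simp only [Er, Finset.mem_filter, mem_Ex hD]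
  constructor
  · rintro ⟨⟨u, h, t, rfl, h1, h2, h3, h4, h5, h6⟩, h7⟩
    exact ⟨u, h, t, rfl, h1, h2, h3, h4, h5, h6, h7⟩
  · rintro ⟨u, h, t, rfl, h1, h2, h3, h4, h5, h6, h7⟩
    exact ⟨⟨u, h, t, rfl, h1, h2, h3, h4, h5, h6⟩, h7⟩

noncomputable def c0 : ℝ := Real.cos (3 * Real.pi / 8)
theorem c0_pos : 0 < c0 := 
  Real.cos_pos_of_mem_Ioo ⟨by linarith [Real.pi_pos], by linarith [Real.pi_pos]⟩

theorem E_12 : E 12 = c0 := by unfold E c0; congr 1; push_cast; ring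
theorem E_neg (k : ℤ) : E (-k) = E k := by
  unfold E; rw [← Real.cos_neg]; congr 1; push_cast; ring
theorem E_0 : E 0 = 1 := by simp [E]
theorem E_4 : 0 ≤ E 4 := by
  unfold E
  apply Real.cos_nonneg_of_mem_Icc; constructor <;> push_cast <;> linarith [Real.pi_pos]
theorem E_8 : 0 ≤ E 8 := by
  unfold E
  apply Real.cos_nonneg_of_mem_Icc; constructor <;> push_cast <;> linarith [Real.pi_pos]

theorem Ex_adj {u h : ℤ × ℤ} {t : List (ℤ × ℤ)} (hc : (u :: (h :: t ++ [(0, 0)])).IsChain Adj) : Adj h u :=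
  (List.isChain_cons_cons.1 hc).1.symm

theorem E_bot {u h : ℤ × ℤ} {t : List (ℤ × ℤ)} {D : Set (ℤ × ℤ)} (hD : ∀ w ∈ D, 1 ≤ w.2)
    (hc : (u :: (h :: t ++ [(0, 0)])).IsChain Adj) (hn : (u :: (h :: t ++ [(0, 0)])).Nodup)
    (hl : (u :: h :: t).getLast (by simp) = (0, 1)) (hd : ∀ w ∈ h :: t, w ∈ D) (hu : u.2 = 0) :
    E (ph (u :: (h :: t ++ [(0, 0)]))) = c0 := by
  rcases exit_bot (hc.imp fun _ _ h => h.U) hn hl (fun w hw => hD w (hd w hw)) hu with e | e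
  · rw [e, E_12]
  · rw [e, E_neg, E_12]

theorem E_top {u h : ℤ × ℤ} {t : List (ℤ × ℤ)} {D : Set (ℤ × ℤ)} (hD : ∀ w ∈ D, 1 ≤ w.2)
    (hc : (u :: (h :: t ++ [(0, 0)])).IsChain Adj) (hn : (u :: (h :: t ++ [(0, 0)])).Nodup)
    (hl : (u :: h :: t).getLast (by simp) = (0, 1)) (hd : ∀ w ∈ h :: t, w ∈ D) (hu : ∀ w ∈ D, w.2 < u.2) :
    E (ph (u :: (h :: t ++ [(0, 0)]))) = 1 := by
  rw [exit_top (hc.imp fun _ _ h => h.U) hn hl (fun w hw => hD w (hd w hw)) (fun w hw => hu w (hd w hw)), E_0]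

theorem sum_half (n : ℕ) : ∑ m ∈ Ex half n, E (ph m) = c0 * ((Er half 0 n).card : ℝ) := by
  have : Er half 0 n = Ex half n := by
    unfold Er
    rw [Finset.filter_eq_self]
    intro m hm
    obtain ⟨u, h, t, rfl, h1, h2, h3, h4, h5, h6⟩ := (mem_Ex half_pos).1 hm
    have := Ex_adj h1
    have h7 := h4 h (by simp)
    simp only [half, Set.mem_ofPred_eq] at h5 h7
    unfold Adj at this
    simp only [List.headD_cons]; omega
  rw [this, Finset.sum_congr rfl (g := fun _ => c0)]
  · simp [mul_comm]
  intro m hm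
  rw [← this] at hm
  obtain ⟨u, h, t, rfl, h1, h2, h3, h4, h5, h6, h7⟩ := (mem_Er half_pos).1 hm
  exact E_bot half_pos h1 h2 h3 h4 h7

theorem sum_strip (T n : ℕ) : ∑ m ∈ Ex (strip T) n, E (ph m) =
    c0 * ((Er (strip T) 0 n).card : ℝ) + ((Er (strip T) (T + 1) n).card : ℝ) := by
  have : ∀ m ∈ Ex (strip T) n, E (ph m) = (if (m.headD (0, 0)).2 = 0 then c0 else 0) + 
      (if (m.headD (0, 0)).2 = (T : ℤ) + 1 then 1 else 0) := by
    intro m hm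
    obtain ⟨u, h, t, rfl, h1, h2, h3, h4, h5, h6⟩ := (mem_Ex (strip_pos T)).1 hm
    have := Ex_adj h1
    have h7 := h4 h (by simp)
    change E _ = (if u.2 = 0 then c0 else 0) + (if u.2 = (T : ℤ) + 1 then 1 else 0)
    have : u.2 = 0 ∨ u.2 = T + 1 := by
      simp only [strip, Set.mem_ofPred_eq] at h5 h7
      unfold Adj at this
      omega
    rcases this with e | e
    · rw [E_bot (strip_pos T) h1 h2 h3 h4 e, if_pos e, if_neg (by omega), add_zero]
    · rw [E_top (strip_pos T) h1 h2 h3 h4, if_neg (by omega), if_pos e, zero_add]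
      intro w hw; have := hw.2; omega
  rw [Finset.sum_congr rfl this, Finset.sum_add_distrib, ← Finset.sum_filter, ← Finset.sum_filter]
  unfold Er
  simp [mul_comm]

theorem sum_rect (T L n : ℕ) : ((Er (rect T L) (T + 1) n).card : ℝ) ≤ ∑ m ∈ Ex (rect T L) n, E (ph m) := by
  have : ∀ m ∈ Ex (rect T L) n, (if (m.headD (0, 0)).2 = (T : ℤ) + 1 then 1 else 0) ≤ E (ph m) := by
    intro m hm
    obtain ⟨u, h, t, rfl, h1, h2, h3, h4, h5, h6⟩ := (mem_Ex (rect_pos T L)).1 hm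
    have := Ex_adj h1
    have h7 := h4 h (by simp)
    change (if u.2 = (T : ℤ) + 1 then 1 else 0) ≤ E _
    have : u.2 = 0 ∨ u.2 = T + 1 ∨ ((u.1 = L + 1 ∨ u.1 = - L - 1) ∧ u.2 ≤ T) := by
      simp only [rect, Set.mem_ofPred_eq] at h5 h7
      unfold Adj at this
      omega
    have hp : ∀ w ∈ h :: t, 1 ≤ w.2 := fun w hw => rect_pos T L w (h4 w hw)
    rcases this with e | e | ⟨e | e, e'⟩
    · rw [E_bot (rect_pos T L) h1 h2 h3 h4 e, if_neg (by omega)]; exact c0_pos.le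
    · rw [E_top (rect_pos T L) h1 h2 h3 h4, if_pos e]
      intro w hw; have := hw.1.2; omega
    · rw [if_neg (by omega)]
      rcases exit_right (h1.imp fun _ _ h => h.U) h2 h3 hp (by omega)
        (fun w hw => by have := (h4 w hw).2.2; omega) with e | e <;> rw [e, E_neg]
      · exact E_4
      · exact E_8
    · rw [if_neg (by omega)]
      rcases exit_left (h1.imp fun _ _ h => h.U) h2 h3 hp (by omega)
        (fun w hw => by have := (h4 w hw).2.1; omega) with e | e <;> rw [e]
      · exact E_4
      · exact E_8
  refine le_trans (le_of_eq ?_) (Finset.sum_le_sum this)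
  rw [← Finset.sum_filter]
  unfold Er
  simp

theorem rect_finite (T L : ℕ) : (rect T L).Finite := by
  have : rect T L ⊆ Set.Icc (-(L : ℤ), 1) (L, T) := by
    rintro ⟨a, b⟩ h
    simp only [rect, Set.mem_ofPred_eq] at h
    simp only [Set.mem_Icc, Prod.mk_le_mk]; tauto
  exact (Set.finite_Icc _ _).subset this

theorem LL_rect (T L n : ℕ) (hn : (rect T L).ncard ≤ n) : LL (rect T L) n = ∅ := by
  classical
  rw [Finset.eq_empty_iff_forall_notMem]
  intro l hl
  obtain ⟨h, t, rfl, h1, h2, h3, h4, h5⟩ := (mem_LL (rect_pos T L)).1 hl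
  have h6 : ((h :: t).toFinset : Set (ℤ × ℤ)) ⊆ rect T L := by
    intro w hw
    simp only [Finset.mem_coe, List.mem_toFinset] at hw
    exact h4 w hw
  have h7 := Set.ncard_le_ncard h6 (rect_finite T L)
  rw [Set.ncard_coe_finset, List.toFinset_card_of_nodup h2, List.length_cons] at h7
  omega

theorem rect_le (T L N : ℕ) (hT : 1 ≤ T) :
    ∑ k ∈ Finset.range N, xc ^ (k + 1) * ((Er (rect T L) (T + 1) k).card : ℝ) ≤ 1 := by
  have hx := xc_pos
  have h1 : (0, 1) ∈ rect T L := by simp [rect]; exact hT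
  have := obs_id (rect_pos T L) h1 (N + (rect T L).ncard)
  rw [LL_rect _ _ _ (by omega), Finset.sum_empty, mul_zero, add_zero] at this
  rw [this]
  calc _ ≤ ∑ k ∈ Finset.range (N + (rect T L).ncard), xc ^ (k + 1) * ((Er (rect T L) (T + 1) k).card : ℝ) := by
        refine Finset.sum_le_sum_of_subset_of_nonneg (Finset.range_mono (by omega)) ?_
        intros; positivity
    _ ≤ _ := by
        refine Finset.sum_le_sum fun k _ => ?_
        exact mul_le_mul_of_nonneg_left (sum_rect T L k) (by positivity)

theorem chain_dist {l : List (ℤ × ℤ)} (hc : l.IsChain Adj) (hl : l.getLast? = some (0, 0)) :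
    ∀ w ∈ l, |w.1| ≤ l.length := by
  induction l with
  | nil => simp
  | cons a l ih =>
    match l with
    | [] => simp at hl; simp [hl]
    | b :: l =>
      rw [List.getLast?_cons_cons] at hl
      have hc' := List.isChain_cons_cons.1 hc
      have ih' := ih hc'.2 hl
      intro w hw
      have hb := ih' b (by simp)
      rcases List.mem_cons.1 hw with rfl | hw
      · have := hc'.1
        unfold Adj at this
        simp only [List.length_cons] at *
        push_cast at *
        rw [abs_le] at *
        omega
      · have := ih' w hw
        simp only [List.length_cons] at *
        push_cast at *
        omega

/-- top exits of the strip -/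
noncomputable def Tp (T n : ℕ) : Finset (List (ℤ × ℤ)) := Er (strip T) (T + 1) n

theorem Tp_sub (T k N : ℕ) (h : k < N) : Tp T k ⊆ Er (rect T (N + 3)) (T + 1) k := by
  intro m hm
  unfold Tp at hm
  obtain ⟨u, h, t, rfl, h1, h2, h3, h4, h5, h6, h7⟩ := (mem_Er (strip_pos T)).1 hm
  rw [mem_Er (rect_pos _ _)]
  refine ⟨u, h, t, rfl, h1, h2, h3, ?_, fun hu => h5 hu.1, h6, h7⟩
  intro w hw
  refine ⟨h4 w hw, ?_⟩
  have := chain_dist h1 (by rw [← List.cons_append]; exact List.getLast?_concat) w (by simp at hw ⊢; tauto)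
  simp only [List.length_cons, List.length_append, h6] at this
  push_cast at *
  simp at this
  rw [abs_le] at this
  omega

theorem B_le (T N : ℕ) (hT : 1 ≤ T) : ∑ k ∈ Finset.range N, xc ^ (k + 1) * ((Tp T k).card : ℝ) ≤ 1 := by
  have hx := xc_pos
  refine le_trans (Finset.sum_le_sum fun k hk => ?_) (rect_le T (N + 3) N hT)
  have := Finset.card_le_card (Tp_sub T k N (Finset.mem_range.1 hk))
  gcongr

end Hex

namespace Hex

def mv (v w z : ℤ × ℤ) : ℤ × ℤ :=
  if (v.1 + v.2 + w.1 + w.2) % 2 = 0 then (w.1 + (z.1 - v.1), w.2 + (z.2 - v.2))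
  else (w.1 - (z.1 - v.1), w.2 - (z.2 - v.2))

theorem mv_adj {v w p q : ℤ × ℤ} (h : Adj p q) : Adj (mv v w p) (mv v w q) := by
  unfold mv
  unfold Adj at *
  split_ifs <;> dsimp only <;> omega

theorem mv_self (v w : ℤ × ℤ) : mv v w v = w := by
  unfold mv; split_ifs <;> simp

theorem mv_mv (v w z : ℤ × ℤ) : mv w v (mv v w z) = z := by
  have : (w.1 + w.2 + v.1 + v.2) = (v.1 + v.2 + w.1 + w.2) := by ring
  unfold mv
  rw [this]
  split_ifs <;> ext <;> simp

theorem mv_inj (v w : ℤ × ℤ) : Function.Injective (mv v w) := 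
  Function.LeftInverse.injective (g := mv w v) (mv_mv v w)

theorem map_mv_W {v w : ℤ × ℤ} {n : ℕ} {l : List (ℤ × ℤ)} (h : l ∈ W v n) : l.map (mv v w) ∈ W w n := by
  rw [mem_W] at *
  obtain ⟨h1, h2, h3, h4⟩ := h
  refine ⟨by simpa using h1, h2.map (mv_inj v w), ?_, ?_⟩
  · rw [List.isChain_map]; exact h3.imp fun _ _ h => mv_adj h
  · rw [List.getLast?_map, h4]; simp [mv_self]

noncomputable def σ (n : ℕ) : ℕ := (W (0, 0) n).card

theorem card_W_le (v w : ℤ × ℤ) (n : ℕ) : (W v n).card ≤ (W w n).card :=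
  Finset.card_le_card_of_injOn (List.map (mv v w)) (fun _ h => map_mv_W h)
    (fun _ _ _ _ h => (List.map_injective_iff.2 (mv_inj v w)) h)

theorem card_W (v : ℤ × ℤ) (n : ℕ) : (W v n).card = σ n :=
  le_antisymm (card_W_le _ _ _) (card_W_le _ _ _)

theorem split_last {v z : ℤ × ℤ} {s r : List (ℤ × ℤ)} (h : (s ++ z :: r).getLast? = some v) :
    (z :: r).getLast? = some v := by
  rw [List.getLast?_append] at h
  cases hh : (z :: r).getLast? with
  | none => simp at hh
  | some a => rw [hh] at h; simpa using h

theorem split_W {v z : ℤ × ℤ} {n : ℕ} {s r : List (ℤ × ℤ)} (h : s ++ z :: r ∈ W v n) :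
    z :: r ∈ W v r.length ∧ s ++ [z] ∈ W z s.length ∧ n = s.length + r.length := by
  rw [mem_W] at h
  obtain ⟨h1, h2, h3, h4⟩ := h
  rw [List.isChain_split] at h3
  refine ⟨?_, ?_, by simp at h1; omega⟩
  · rw [mem_W]
    exact ⟨by simp, (List.nodup_append.1 h2).2.1, h3.2, split_last h4⟩
  · rw [mem_W]
    refine ⟨by simp, ?_, h3.1, by simp⟩
    have : s ++ z :: r = (s ++ [z]) ++ r := by simp
    rw [this] at h2
    exact (List.nodup_append.1 h2).1

open Classical in
noncomputable def glue (A : Finset (List (ℤ × ℤ))) (j : ℕ) : Finset (List (ℤ × ℤ)) :=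
  A.biUnion fun m => (W (m.headD (0, 0)) j).image (fun w => w.dropLast ++ m)

theorem card_glue (A : Finset (List (ℤ × ℤ))) (j : ℕ) : (glue A j).card ≤ A.card * σ j := by
  unfold glue
  refine Finset.card_biUnion_le.trans ?_
  rw [← smul_eq_mul]
  refine Finset.sum_le_card_nsmul _ _ _ fun m _ => ?_
  exact Finset.card_image_le.trans (card_W _ _).le

theorem mem_glue {A : Finset (List (ℤ × ℤ))} {z : ℤ × ℤ} {s r : List (ℤ × ℤ)} (hA : z :: r ∈ A) (hW : s ++ [z] ∈ W z s.length) :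
    s ++ z :: r ∈ glue A s.length := by
  simp only [glue, Finset.mem_biUnion, Finset.mem_image]
  exact ⟨_, hA, s ++ [z], hW, by simp⟩

theorem σ_mul (m n : ℕ) : σ (m + n) ≤ σ m * σ n := by
  have : W (0, 0) (m + n) ⊆ glue (W (0, 0) m) n := by
    intro l hl
    have hlen := (mem_W.1 hl).1
    have hlt : n < l.length := by omega
    have e : l = l.take n ++ l[n] :: l.drop (n + 1) := by simp
    rw [e] at hl
    obtain ⟨h1, h2, h3⟩ := split_W hl
    have hn : (l.take n).length = n := by simp; omega
    have hm : (l.drop (n + 1)).length = m := by simp; omega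
    rw [hm] at h1
    have := mem_glue h1 h2
    rw [hn] at this
    rw [e]; exact this
  exact (Finset.card_le_card this).trans (card_glue _ _)

theorem exists_split {α : Type*} (P : α → Prop) {l : List α} (h : ∃ w ∈ l, P w) :
    ∃ s z r, l = s ++ z :: r ∧ P z ∧ ∀ w ∈ r, ¬ P w := by
  induction l with
  | nil => simp at h
  | cons a l ih =>
    by_cases h' : ∃ w ∈ l, P w
    · obtain ⟨s, z, r, rfl, h1, h2⟩ := ih h'
      exact ⟨a :: s, z, r, rfl, h1, h2⟩
    · push Not at h'
      refine ⟨[], a, l, rfl, ?_, h'⟩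
      obtain ⟨w, hw, hp⟩ := h
      rcases List.mem_cons.1 hw with rfl | hw
      · exact hp
      · exact absurd hp (h' w hw)

theorem chain_rows {l : List (ℤ × ℤ)} {a z : ℤ × ℤ} (hc : (a :: l ++ [z]).IsChain Adj) : z.2 - a.2 ≤ l.length + 1 := by
  induction l generalizing a with
  | nil =>
    simp at hc
    unfold Adj at hc
    simp; omega
  | cons b l ih =>
    simp only [List.cons_append] at *
    rw [List.isChain_cons_cons] at hc
    have := ih hc.2
    have h2 := hc.1
    unfold Adj at h2
    simp only [List.length_cons]; push_cast; omega

theorem half_cover (T n : ℕ) (hT : 1 ≤ T) : Er half 0 n ⊆ Er (strip T) 0 n ∪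
    ((Finset.range (n + 1)).filter (fun k => T ≤ n - k)).biUnion (fun k => glue (Tp T k) (n - k)) := by
  intro m hm
  obtain ⟨u, h, t, rfl, h1, h2, h3, h4, h5, h6, h7⟩ := (mem_Er half_pos).1 hm
  rw [Finset.mem_union]
  by_cases hx : ∃ w ∈ h :: t, (T : ℤ) < w.2
  · right
    obtain ⟨s, z, r, e, hz, hr⟩ := exists_split (fun w : ℤ × ℤ => (T : ℤ) < w.2) hx
    have e' : u :: (h :: t ++ [(0, 0)]) = (u :: s) ++ z :: (r ++ [(0, 0)]) := by rw [e]; simp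
    have hl1 : (h :: t).getLast? = some (0, 1) := by
      rw [List.getLast?_eq_getLast_of_ne_nil (by simp)]; simpa using h3
    rw [e] at hl1
    have hl2 := split_last hl1
    have hlen : s.length + r.length = n := by
      have := congrArg List.length e
      simp at this; omega
    match r with
    | [] =>
      simp at hl2; subst hl2; simp at hz; omega
    | b :: r =>
    rw [e'] at h1 h2 ⊢
    have hc := List.isChain_split.1 h1
    have hrow := chain_rows hc.1
    have hadj := (List.isChain_cons_cons.1 hc.2).1
    have hb := hr b (by simp)
    have hz2 : z.2 = T + 1 := by unfold Adj at hadj; omega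
    have hTp : z :: (b :: r ++ [(0, 0)]) ∈ Tp T r.length := by
      unfold Tp
      rw [mem_Er (strip_pos T)]
      refine ⟨z, b, r, rfl, hc.2, (List.nodup_append.1 h2).2.1, ?_, ?_, ?_, rfl, hz2⟩
      · rw [List.getLast?_eq_getLast_of_ne_nil (by simp)] at hl2; exact Option.some.inj hl2
      · intro w hw
        exact ⟨h4 w (by rw [e]; simp only [List.mem_append, List.mem_cons] at hw ⊢; tauto), not_lt.1 (hr w hw)⟩
      · intro hh; have := hh.2; omega
    have hW : (u :: s) ++ [z] ∈ W z (u :: s).length := by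
      rw [mem_W]
      refine ⟨by simp, ?_, hc.1, by rw [List.getLast?_append]; simp⟩
      have : (u :: s) ++ z :: (b :: r ++ [(0, 0)]) = (u :: s ++ [z]) ++ (b :: r ++ [(0, 0)]) := by simp
      rw [this] at h2
      exact (List.nodup_append.1 h2).1
    have := mem_glue hTp hW
    simp only [List.length_cons] at hlen this
    rw [Finset.mem_biUnion]
    refine ⟨r.length, ?_, ?_⟩
    · rw [Finset.mem_filter, Finset.mem_range]; omega
    · have e3 : n - r.length = s.length + 1 := by omega
      rw [e3]; exact this
  · left
    push Not at hx
    rw [mem_Er (strip_pos T)]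
    exact ⟨u, h, t, rfl, h1, h2, h3, fun w hw => ⟨h4 w hw, hx w hw⟩, fun hu => h5 hu.1, h6, h7⟩

theorem half_card (T n : ℕ) (hT : 1 ≤ T) : (Er half 0 n).card ≤ (Er (strip T) 0 n).card +
    ∑ k ∈ Finset.range (n + 1), (Tp T k).card * (if T ≤ n - k then σ (n - k) else 0) := by
  refine (Finset.card_le_card (half_cover T n hT)).trans ((Finset.card_union_le _ _).trans ?_)
  refine Nat.add_le_add_left (Finset.card_biUnion_le.trans ?_) _
  rw [Finset.sum_filter]
  refine Finset.sum_le_sum fun k _ => ?_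
  split_ifs
  · exact card_glue _ _
  · simp

theorem half_sum (T N : ℕ) (hT : 1 ≤ T) : ∑ n ∈ Finset.range N, xc ^ (n + 1) * ((Er half 0 n).card : ℝ) ≤
    ∑ n ∈ Finset.range N, xc ^ (n + 1) * ((Er (strip T) 0 n).card : ℝ) +
    (∑ k ∈ Finset.range N, xc ^ (k + 1) * ((Tp T k).card : ℝ)) *
      ∑ j ∈ (Finset.range N).filter (fun j => T ≤ j), (σ j : ℝ) * xc ^ j := by
  have hx := xc_pos
  set s : ℕ → ℝ := fun j => if T ≤ j then (σ j : ℝ) * xc ^ j else 0 with hs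
  have hs0 : ∀ j, 0 ≤ s j := by intro j; simp only [hs]; split_ifs <;> positivity
  set b : ℕ → ℝ := fun k => xc ^ (k + 1) * ((Tp T k).card : ℝ) with hb
  have h1 : ∀ n ∈ Finset.range N, xc ^ (n + 1) * ((Er half 0 n).card : ℝ) ≤
      xc ^ (n + 1) * ((Er (strip T) 0 n).card : ℝ) + ∑ k ∈ Finset.range (n + 1), b k * s (n - k) := by
    intro n _
    have : ((Er half 0 n).card : ℝ) ≤ (Er (strip T) 0 n).card +
      ∑ k ∈ Finset.range (n + 1), ((Tp T k).card : ℝ) * (if T ≤ n - k then (σ (n - k) : ℝ) else 0) := by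
      exact_mod_cast half_card T n hT
    calc _ ≤ xc ^ (n + 1) * (((Er (strip T) 0 n).card : ℝ) +
      ∑ k ∈ Finset.range (n + 1), ((Tp T k).card : ℝ) * (if T ≤ n - k then (σ (n - k) : ℝ) else 0)) :=
          mul_le_mul_of_nonneg_left this (by positivity)
      _ = _ := by
        rw [mul_add, Finset.mul_sum]
        congr 1
        refine Finset.sum_congr rfl fun k hk => ?_
        have hk' : k ≤ n := by simp at hk; omega
        have : xc ^ (n + 1) = xc ^ (k + 1) * xc ^ (n - k) := by rw [← pow_add]; congr 1; omega
        rw [this]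
        simp only [hs, hb]
        split_ifs <;> ring
  refine (Finset.sum_le_sum h1).trans ?_
  rw [Finset.sum_add_distrib]
  refine add_le_add_right ?_ _
  rw [Finset.sum_range_diag_flip N (fun k j => b k * s j), Finset.sum_filter, Finset.sum_mul]
  refine Finset.sum_le_sum fun k _ => ?_
  rw [← Finset.mul_sum]
  refine mul_le_mul_of_nonneg_left ?_ (by simp only [hb]; positivity)
  refine Finset.sum_le_sum_of_subset_of_nonneg (Finset.range_mono (by omega)) ?_
  intro j _ _; exact hs0 j

def stair : ℕ → List (ℤ × ℤ)
  | 0 => [(0, 1)]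
  | T + 1 => ((T : ℤ) + 1, (T : ℤ) + 2) :: ((T : ℤ) + 1, (T : ℤ) + 1) :: stair T

theorem stair_prop (T : ℕ) : ∃ t, stair T = ((T : ℤ), (T : ℤ) + 1) :: t ∧
    (stair T ++ [(0, 0)]).IsChain (fun a b => Adj a b ∧ b.1 + b.2 < a.1 + a.2) ∧ (stair T).getLast? = some (0, 1) ∧
    ∀ w ∈ t, w ∈ strip T := by
  induction T with
  | zero => exact ⟨[], by simp [stair], by simp [stair, Adj], by simp [stair], by simp⟩
  | succ T ih =>
    obtain ⟨t, h1, h2, h3, h4⟩ := ih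
    refine ⟨((T : ℤ) + 1, (T : ℤ) + 1) :: stair T, by simp [stair]; ring, ?_, ?_, ?_⟩
    · simp only [stair, List.cons_append]
      rw [h1] at h2 ⊢
      simp only [List.cons_append] at *
      refine List.isChain_cons_cons.2 ⟨?_, List.isChain_cons_cons.2 ⟨?_, h2⟩⟩
      · unfold Adj; dsimp only; omega
      · unfold Adj; dsimp only; omega
    · rw [h1] at h3
      simp only [stair]
      rw [h1, List.getLast?_cons_cons, List.getLast?_cons_cons]; exact h3
    · intro w hw
      rw [h1] at hw
      rcases List.mem_cons.1 hw with rfl | hw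
      · simp [strip]
      rcases List.mem_cons.1 hw with rfl | hw
      · simp [strip]
      · have := h4 w hw
        simp only [strip, Set.mem_ofPred_eq] at *
        push_cast; omega

theorem stair_ne (T : ℕ) (hT : 1 ≤ T) : ∃ k, (Tp T k).Nonempty := by
  obtain ⟨t, h1, h2, h3, h4⟩ := stair_prop T
  match t, h1, h4 with
  | [], h1, _ =>
    rw [h1] at h3; simp at h3; omega
  | h :: t, h1, h4 =>
    refine ⟨t.length, stair T ++ [(0, 0)], ?_⟩
    unfold Tp
    rw [mem_Er (strip_pos T)]
    refine ⟨_, h, t, by rw [h1]; rfl, h2.imp fun _ _ h => h.1, ?_, ?_, h4, ?_, rfl, rfl⟩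
    · have : (stair T ++ [(0, 0)]).IsChain (fun a b : ℤ × ℤ => b.1 + b.2 < a.1 + a.2) := h2.imp fun _ _ h => h.2
      have htr : IsTrans (ℤ × ℤ) (fun a b : ℤ × ℤ => b.1 + b.2 < a.1 + a.2) := ⟨fun a b c h h' => lt_trans h' h⟩
      have := (List.isChain_iff_pairwise).1 this
      refine this.imp ?_
      rintro a b hab rfl; exact lt_irrefl _ hab
    · rw [h1] at h3
      exact last_eq h3
    · intro hh; have := hh.2; simp at this

theorem LL_le (D : Set (ℤ × ℤ)) (N : ℕ) : |∑ l ∈ LL D N, E (ph l)| ≤ σ (N + 1) := by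
  refine (Finset.abs_sum_le_sum_abs _ _).trans ?_
  have : ∑ l ∈ LL D N, |E (ph l)| ≤ ∑ l ∈ LL D N, (1 : ℝ) := Finset.sum_le_sum fun l _ => Real.abs_cos_le_one _
  refine this.trans ?_
  simp only [Finset.sum_const, nsmul_eq_mul, mul_one]
  have h2 : LL D N ⊆ W (0, 0) (N + 1) := by
    intro l hl; simp only [LL, Finset.mem_filter] at hl; exact hl.1
  exact_mod_cast Finset.card_le_card h2

theorem c0_le : c0 ≤ 1 := Real.cos_le_one _

theorem not_summable : ¬ Summable (fun n => (σ n : ℝ) * xc ^ n) := by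
  intro hs
  have hx := xc_pos
  have hc0 := c0_pos
  have hc1 := c0_le
  obtain ⟨T, hT, htail⟩ : ∃ T : ℕ, 1 ≤ T ∧ ∀ N, ∑ j ∈ (Finset.range N).filter (fun j => T ≤ j), (σ j : ℝ) * xc ^ j ≤ 1 / 2 := by
    obtain ⟨s, hs'⟩ := summable_iff_vanishing.1 hs (Metric.ball 0 (1 / 2)) (Metric.ball_mem_nhds _ (by norm_num))
    refine ⟨s.sup id + 1, by omega, fun N => ?_⟩
    have := hs' ((Finset.range N).filter (fun j => s.sup id + 1 ≤ j)) (by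
      rw [Finset.disjoint_left]
      intro a ha ha'
      have h1 : a ≤ s.sup id := Finset.le_sup (f := id) ha'
      have h2 := (Finset.mem_filter.1 ha).2
      omega)
    rw [Metric.mem_ball, dist_zero_right, Real.norm_eq_abs] at this
    exact (le_abs_self _).trans this.le
  obtain ⟨k0, hk0⟩ := stair_ne T hT
  have hk1 : (1 : ℝ) ≤ (Tp T k0).card := by exact_mod_cast Finset.card_pos.2 hk0
  have hlow : ∀ N, k0 < N → xc ^ (k0 + 1) ≤ ∑ k ∈ Finset.range N, xc ^ (k + 1) * ((Tp T k).card : ℝ) := by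
    intro N hN
    refine le_trans ?_ (Finset.single_le_sum (f := fun k => xc ^ (k + 1) * ((Tp T k).card : ℝ)) (fun k _ => by positivity)
      (Finset.mem_range.2 hN))
    exact le_mul_of_one_le_right (by positivity) hk1
  have hup : ∀ N, ∑ k ∈ Finset.range N, xc ^ (k + 1) * ((Tp T k).card : ℝ) ≤ 4 / xc * ((σ (N + 1) : ℝ) * xc ^ (N + 1)) := by
    intro N
    have e1 := obs_id half_pos (by simp [half]) N
    have e2 := obs_id (strip_pos T) (by simp [strip]; omega) N
    have h1 := half_sum T N hT
    simp only [sum_half] at e1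
    simp only [sum_strip, mul_add, Finset.sum_add_distrib] at e2
    have hB0 : 0 ≤ ∑ k ∈ Finset.range N, xc ^ (k + 1) * ((Tp T k).card : ℝ) := 
      Finset.sum_nonneg fun k _ => by positivity
    have h2 := mul_le_mul_of_nonneg_left (htail N) hB0
    have a1 := abs_le.1 (LL_le half N)
    have a2 := abs_le.1 (LL_le (strip T) N)
    have ec : ∀ D, ∑ k ∈ Finset.range N, xc ^ (k + 1) * (c0 * ((Er D 0 k).card : ℝ)) = 
      c0 * ∑ k ∈ Finset.range N, xc ^ (k + 1) * ((Er D 0 k).card : ℝ) := by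
      intro D; rw [Finset.mul_sum]; exact Finset.sum_congr rfl fun k _ => by ring
    rw [ec] at e1 e2
    have e3 : 4 / xc * ((σ (N + 1) : ℝ) * xc ^ (N + 1)) = 4 * (xc ^ N * σ (N + 1)) := by
      rw [pow_succ]; field_simp
    rw [e3]
    change 1 = _ + ∑ k ∈ Finset.range N, xc ^ (k + 1) * ((Tp T k).card : ℝ) + _ at e2
    set B := ∑ k ∈ Finset.range N, xc ^ (k + 1) * ((Tp T k).card : ℝ)
    have hxN : 0 < xc ^ N := by positivity
    have b1 := mul_le_mul_of_nonneg_left a1.2 hxN.le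
    have b2 := mul_le_mul_of_nonneg_left a2.1 hxN.le
    have h3 := mul_le_mul_of_nonneg_left (h1.trans (add_le_add_right h2 _)) hc0.le
    have h4 : c0 * B ≤ B := mul_le_of_le_one_left hB0 hc1
    nlinarith
  have hlim := (hs.tendsto_atTop_zero.comp (Filter.tendsto_add_atTop_nat 1)).const_mul (4 / xc)
  rw [mul_zero] at hlim
  have hpos : 0 < xc ^ (k0 + 1) := by positivity
  have hev := hlim.eventually (gt_mem_nhds hpos)
  obtain ⟨N, hN1, hN2⟩ := (hev.and (Filter.eventually_gt_atTop k0)).exists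
  have := hup N
  have := hlow N hN2
  simp only [Function.comp] at hN1
  linarith

end Hex

namespace Hex

theorem sum_union_le {α : Type*} [DecidableEq α] (A B : Finset α) (f : α → ℝ) (hf : ∀ a, 0 ≤ f a) :
    ∑ a ∈ A ∪ B, f a ≤ ∑ a ∈ A, f a + ∑ a ∈ B, f a := by
  rw [← Finset.sum_union_inter]
  exact le_add_of_nonneg_right (Finset.sum_nonneg fun _ _ => hf _)

theorem sum_image_le {α β : Type*} [DecidableEq α] (T : Finset β) (J : β → α) (f : α → ℝ) (hf : ∀ a, 0 ≤ f a) :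
    ∑ a ∈ T.image J, f a ≤ ∑ t ∈ T, f (J t) := by
  classical
  induction T using Finset.induction_on with
  | empty => simp
  | insert a s ha ih =>
    rw [Finset.image_insert, Finset.sum_insert ha, Finset.insert_eq]
    refine (sum_union_le _ _ f hf).trans ?_
    rw [Finset.sum_singleton]
    linarith

/-- the tip step, if any, is horizontal -/
def hz (l : List (ℤ × ℤ)) : Prop := ∀ a b r, l = a :: b :: r → a.2 = b.2

open Classical in
noncomputable def Al (N : ℕ) : Finset (List (ℤ × ℤ)) := (Finset.range N).biUnion (W (0, 1))

theorem mem_Al {N : ℕ} {l : List (ℤ × ℤ)} :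
    l ∈ Al N ↔ l.Nodup ∧ l.IsChain Adj ∧ l.getLast? = some (0, 1) ∧ l.length ≤ N := by
  simp only [Al, Finset.mem_biUnion, Finset.mem_range, mem_W]
  constructor
  · rintro ⟨n, hn, h1, h2, h3, h4⟩
    exact ⟨h2, h3, h4, by omega⟩
  · rintro ⟨h2, h3, h4, h5⟩
    have : 0 < l.length := List.length_pos_iff.2 (by rintro rfl; simp at h4)
    exact ⟨l.length - 1, by omega, by omega, h2, h3, h4⟩

open Classical in
noncomputable def CC (H N : ℕ) : Finset (List (ℤ × ℤ)) :=
  (Al N).filter (fun l => (∀ w ∈ l, 1 ≤ w.2 ∧ w.2 ≤ H) ∧ hz l)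

theorem mem_CC {H N : ℕ} {l : List (ℤ × ℤ)} :
    l ∈ CC H N ↔ (l.Nodup ∧ l.IsChain Adj ∧ l.getLast? = some (0, 1) ∧ l.length ≤ N) ∧
      (∀ w ∈ l, 1 ≤ w.2 ∧ w.2 ≤ H) ∧ hz l := by
  simp only [CC, Finset.mem_filter, mem_Al]

open Classical in
noncomputable def Br (H N : ℕ) : Finset (List (ℤ × ℤ)) :=
  (Al N).filter (fun l => (∀ w ∈ l, 1 ≤ w.2 ∧ w.2 ≤ H) ∧ ∃ a t, l = a :: t ∧ a.2 = H ∧ (a.1 + a.2) % 2 = 0)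

theorem mem_Br {H N : ℕ} {l : List (ℤ × ℤ)} :
    l ∈ Br H N ↔ (l.Nodup ∧ l.IsChain Adj ∧ l.getLast? = some (0, 1) ∧ l.length ≤ N) ∧
      (∀ w ∈ l, 1 ≤ w.2 ∧ w.2 ≤ H) ∧ ∃ a t, l = a :: t ∧ a.2 = H ∧ (a.1 + a.2) % 2 = 0 := by
  simp only [Br, Finset.mem_filter, mem_Al]

theorem exists_split_first {α : Type*} (P : α → Prop) {l : List α} (h : ∃ w ∈ l, P w) :
    ∃ s z r, l = s ++ z :: r ∧ P z ∧ ∀ w ∈ s, ¬ P w := by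
  obtain ⟨s, z, r, e, h1, h2⟩ := exists_split P (l := l.reverse) (by simpa using h)
  refine ⟨r.reverse, z, s.reverse, ?_, h1, by simpa using h2⟩
  have := congrArg List.reverse e
  simpa using this

def zz (r : List (ℤ × ℤ)) (e : ℤ) : ℤ × ℤ := ((r.headD (0, 0)).1 + e, (r.headD (0, 0)).2)

def ext1 (t : List (ℤ × ℤ) × ℤ) : List (ℤ × ℤ) := zz t.1 t.2 :: t.1

def ext2 (t : (List (ℤ × ℤ) × ℤ) × List (ℤ × ℤ)) : List (ℤ × ℤ) :=
  t.2.map (mv (0, 1) ((zz t.1.1 t.1.2).1, (zz t.1.1 t.1.2).2 - 1)) ++ zz t.1.1 t.1.2 :: t.1.1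

open Classical in
theorem CC_cover (H N : ℕ) : CC (H + 1) N ⊆ CC H N ∪ ((if H = 0 then {[(0, 1)]} else ∅) ∪ (Br (H + 1) N ∪
    ((Br (H + 1) N ×ˢ {1, -1}).image ext1 ∪ ((Br (H + 1) N ×ˢ {1, -1}) ×ˢ CC H N).image ext2))) := by
  intro l hl
  obtain ⟨⟨h1, h2, h3, h4⟩, h5, h6⟩ := mem_CC.1 hl
  by_cases hx : ∃ w ∈ l, w.2 = (H : ℤ) + 1
  swap
  · push Not at hx
    refine Finset.mem_union_left _ (mem_CC.2 ⟨⟨h1, h2, h3, h4⟩, fun w hw => ?_, h6⟩)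
    have := h5 w hw
    have := hx w hw
    push_cast at *; omega
  refine Finset.mem_union_right _ ?_
  obtain ⟨s, z, r, rfl, hz2, hs⟩ := exists_split_first _ hx
  have hr : ∀ w ∈ r, w ∈ s ++ z :: r := fun w hw => by simp [hw]
  have hrest : ∀ b r', r = b :: r' → b.2 = z.2 → (z.1 + z.2) % 2 = 1 →
      r ∈ Br (H + 1) N ∧ ∃ e ∈ ({1, -1} : Finset ℤ), z = zz r e := by
    rintro b r' rfl hb hodd
    have hadj := (List.isChain_cons_cons.1 (List.isChain_split.1 h2).2).1
    refine ⟨mem_Br.2 ⟨⟨?_, ?_, ?_, ?_⟩, fun w hw => h5 w (hr w hw), b, r', rfl, ?_, ?_⟩, z.1 - b.1, ?_, ?_⟩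
    · exact (List.nodup_cons.1 (List.nodup_append.1 h1).2.1).2
    · exact (List.isChain_split.1 h2).2.tail
    · have := split_last h3
      rwa [List.getLast?_cons_cons] at this
    · refine le_trans ?_ h4; simp; omega
    · push_cast; omega
    · unfold Adj at hadj; omega
    · unfold Adj at hadj
      simp only [Finset.mem_insert, Finset.mem_singleton]; omega
    · unfold zz; rw [Prod.ext_iff]; simp [hb]
  rcases List.eq_nil_or_concat s with rfl | ⟨s0, v, rfl⟩
  · rw [List.nil_append] at *
    by_cases hpar : (z.1 + z.2) % 2 = 0
    · refine Finset.mem_union_right _ (Finset.mem_union_left _ (mem_Br.2 ⟨⟨h1, h2, h3, h4⟩, h5, z, r, rfl, ?_, hpar⟩))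
      push_cast; exact hz2
    · match r with
      | [] =>
        refine Finset.mem_union_left _ ?_
        simp at h3; subst h3
        simp at hz2
        rw [if_pos hz2]; simp
      | b :: r =>
        refine Finset.mem_union_right _ (Finset.mem_union_right _ (Finset.mem_union_left _ ?_))
        obtain ⟨h7, e, he, h8⟩ := hrest b r rfl (h6 _ _ _ rfl).symm (by omega)
        rw [Finset.mem_image]
        refine ⟨(b :: r, e), Finset.mem_product.2 ⟨h7, he⟩, ?_⟩
        unfold ext1; rw [← h8]
  · refine Finset.mem_union_right _ (Finset.mem_union_right _ (Finset.mem_union_right _ ?_))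
    have e1 : s0.concat v ++ z :: r = s0 ++ v :: z :: r := by simp
    rw [List.concat_eq_append] at *
    have hvz : Adj v z := by
      have := List.isChain_append_cons_cons.1 (e1 ▸ h2)
      exact this.2.1
    have hv1 := h5 v (by simp)
    have hv2 := hs v (by simp)
    have hvv : v = (z.1, z.2 - 1) ∧ (v.1 + v.2) % 2 = 0 := by
      unfold Adj at hvz
      push_cast at *
      rw [Prod.ext_iff]; dsimp only; omega
    match r with
    | [] =>
      have := split_last h3
      simp at this; subst this
      have := hvv.1
      rw [Prod.ext_iff] at this
      simp at this; omega
    | b :: r =>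
      have hzb : Adj z b := (List.isChain_cons_cons.1 (List.isChain_split.1 h2).2).1
      have hvb : v ≠ b := by
        rintro rfl
        simp [List.nodup_append] at h1
      have hzodd : (z.1 + z.2) % 2 = 1 := by
        have e := hvv.1
        have := hvv.2
        rw [Prod.ext_iff] at e; dsimp only at e; omega
      obtain ⟨h7, e, he, h8⟩ := hrest b r rfl (by
        have e := hvv.1
        rw [Ne, Prod.ext_iff] at hvb
        rw [Prod.ext_iff] at e; dsimp only at e
        unfold Adj at hzb; omega) hzodd
      rw [Finset.mem_image]
      refine ⟨((b :: r, e), (s0 ++ [v]).map (mv v (0, 1))), Finset.mem_product.2 ⟨Finset.mem_product.2 ⟨h7, he⟩, ?_⟩, ?_⟩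
      · rw [mem_CC]
        have hpar : ¬ (v.1 + v.2 + (0 : ℤ) + 1) % 2 = 0 := by have := hvv.2; omega
        refine ⟨⟨?_, ?_, ?_, ?_⟩, ?_, ?_⟩
        · exact (List.nodup_append.1 h1).1.map (mv_inj _ _)
        · rw [List.isChain_map]
          exact (List.isChain_append.1 h2).1.imp fun _ _ h => mv_adj h
        · simp [mv_self]
        · refine le_trans ?_ h4; simp
        · intro w hw
          rw [List.mem_map] at hw
          obtain ⟨w, hw, rfl⟩ := hw
          have h9 := h5 w (List.mem_append_left _ hw)
          have h10 := hs w hw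
          unfold mv
          simp only
          rw [if_neg hpar]
          have e := hvv.1
          rw [Prod.ext_iff] at e; dsimp only at e
          push_cast at *
          omega
        · intro a c t' hh
          match s0 with
          | [] => simp at hh
          | [x] =>
            simp at hh
            have := h6 x v _ (by simp; rfl)
            rw [← hh.1, ← hh.2.1]
            unfold mv; split_ifs <;> simp [this]
          | x :: y :: s0 =>
            simp at hh
            have := h6 x y _ (by simp; rfl)
            rw [← hh.1, ← hh.2.1]
            unfold mv; split_ifs <;> simp [this]
      · unfold ext2
        simp only
        rw [← h8, ← hvv.1, List.map_map]
        congr 1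
        rw [List.map_congr_left (g := id)]
        · simp
        · intro a _; exact mv_mv _ _ _

noncomputable def UU (x : ℝ) (H N : ℕ) : ℝ := ∑ l ∈ CC H N, x ^ l.length
noncomputable def BB (x : ℝ) (H N : ℕ) : ℝ := ∑ l ∈ Br H N, x ^ l.length

theorem UU_rec {x : ℝ} (hx : 0 ≤ x) (H N : ℕ) : UU x (H + 1) N ≤ UU x H N + ((if H = 0 then x else 0) + (BB x (H + 1) N +
    (2 * x * BB x (H + 1) N + 2 * x * BB x (H + 1) N * UU x H N))) := by
  classical
  have hf : ∀ l : List (ℤ × ℤ), 0 ≤ x ^ l.length := fun l => by positivity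
  unfold UU
  have h0 := Finset.sum_le_sum_of_subset_of_nonneg (f := fun l : List (ℤ × ℤ) => x ^ l.length) (CC_cover H N) (fun l _ _ => hf l)
  refine h0.trans ?_
  refine (sum_union_le _ _ _ hf).trans ?_
  refine add_le_add_right ?_ _
  refine (sum_union_le _ _ _ hf).trans ?_
  refine add_le_add ?_ ?_
  · split_ifs <;> simp
  refine (sum_union_le _ _ _ hf).trans ?_
  refine add_le_add_right ?_ _
  refine (sum_union_le _ _ _ hf).trans ?_
  refine add_le_add ?_ ?_
  · refine (sum_image_le _ _ _ hf).trans (le_of_eq ?_)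
    rw [Finset.sum_product]
    unfold BB
    rw [Finset.mul_sum]
    refine Finset.sum_congr rfl fun l _ => ?_
    rw [Finset.sum_pair (by norm_num)]
    simp only [ext1, List.length_cons, pow_succ]; ring
  · refine (sum_image_le _ _ _ hf).trans (le_of_eq ?_)
    rw [Finset.sum_product, Finset.sum_product]
    unfold BB
    rw [mul_assoc, Finset.sum_mul, Finset.mul_sum]
    refine Finset.sum_congr rfl fun l _ => ?_
    rw [Finset.sum_pair (by norm_num), Finset.mul_sum, Finset.mul_sum, ← Finset.sum_add_distrib]
    refine Finset.sum_congr rfl fun s _ => ?_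
    simp only [ext2, List.length_cons, List.length_append, List.length_map, pow_succ, pow_add]; ring

theorem UU_zero (x : ℝ) (N : ℕ) : UU x 0 N = 0 := by
  unfold UU
  have : CC 0 N = ∅ := by
    rw [Finset.eq_empty_iff_forall_notMem]
    intro l hl
    obtain ⟨⟨h1, h2, h3, h4⟩, h5, h6⟩ := mem_CC.1 hl
    have := h5 _ (List.mem_of_getLast? h3)
    simp at this
  rw [this]; simp

theorem Br_len {H N : ℕ} {m : List (ℤ × ℤ)} {k : ℕ} (hm : m ∈ Tp H k) : H ≤ k + 1 := by
  unfold Tp at hm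
  obtain ⟨u, h, t, rfl, h1, h2, h3, h4, h5, h6, h7⟩ := (mem_Er (strip_pos H)).1 hm
  rw [← List.isChain_reverse] at h1
  have h8 : ((0, 0) :: (h :: t).reverse ++ [u]).IsChain Adj := by
    have e : (u :: (h :: t ++ [(0, 0)])).reverse = (0, 0) :: (h :: t).reverse ++ [u] := by simp
    rw [e] at h1
    exact h1.imp fun _ _ h => h.symm
  have := chain_rows h8
  simp at this
  omega

theorem BB_le {x : ℝ} (hx : 0 < x) (hxc : x ≤ xc) (H N : ℕ) (hH : 1 ≤ H) : BB x H N ≤ (x / xc) ^ H := by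
  classical
  have hc := xc_pos
  have hf : ∀ l : List (ℤ × ℤ), 0 ≤ x ^ l.length := fun l => by positivity
  have hsub : Br H N ⊆ ((Finset.range N).sigma (Tp H)).image (fun p => p.2.tail.dropLast) := by
    intro l hl
    obtain ⟨⟨h1, h2, h3, h4⟩, h5, a, t, rfl, h6, h7⟩ := mem_Br.1 hl
    rw [Finset.mem_image]
    refine ⟨⟨t.length, (a.1, a.2 + 1) :: (a :: t ++ [(0, 0)])⟩, ?_, ?_⟩
    swap
    · simp only [List.tail_cons]; exact List.dropLast_concat
    rw [Finset.mem_sigma, Finset.mem_range]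
    refine ⟨by simpa using h4, ?_⟩
    unfold Tp
    rw [mem_Er (strip_pos H)]
    refine ⟨_, a, t, rfl, ?_, ?_, ?_, fun w hw => h5 w hw, ?_, rfl, ?_⟩
    · rw [List.cons_append, List.isChain_cons_cons]
      refine ⟨by unfold Adj; dsimp only; omega, ?_⟩
      rw [← List.cons_append, List.isChain_append]
      refine ⟨h2, by simp, ?_⟩
      intro p hp q hq
      rw [h3] at hp
      simp at hp hq
      subst hp; subst hq; simp [Adj]
    · rw [List.nodup_cons, List.nodup_append]
      refine ⟨?_, h1, by simp, ?_⟩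
      · intro hm
        rcases List.mem_append.1 hm with hm | hm
        · have := h5 _ hm; simp at this; omega
        · have := h5 a (by simp)
          simp at hm; omega
      · intro p hp q hq
        have := h5 p hp
        simp at hq; subst hq
        rintro rfl; simp at this
    · rw [List.getLast_cons (by simp)]; exact last_eq h3
    · intro hh; have := hh.2; simp at this; omega
    · simpa using h6
  unfold BB
  refine (Finset.sum_le_sum_of_subset_of_nonneg hsub (fun l _ _ => hf l)).trans ?_
  refine (sum_image_le _ _ _ hf).trans ?_
  rw [Finset.sum_sigma]
  have hr0 : 0 ≤ x / xc := by positivity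
  have hr1 : x / xc ≤ 1 := (div_le_one hc).2 hxc
  calc _ ≤ ∑ k ∈ Finset.range N, (x / xc) ^ H * (xc ^ (k + 1) * ((Tp H k).card : ℝ)) := by
        refine Finset.sum_le_sum fun k _ => ?_
        have : ∀ m ∈ Tp H k, x ^ m.tail.dropLast.length ≤ (x / xc) ^ H * xc ^ (k + 1) := by
          intro m hm
          have hk := Br_len (N := N) hm
          unfold Tp at hm
          obtain ⟨u, h, t, rfl, -, -, -, -, -, h6, -⟩ := (mem_Er (strip_pos H)).1 hm
          have e : (u :: (h :: t ++ [(0, 0)])).tail.dropLast.length = k + 1 := by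
            rw [List.tail_cons, List.dropLast_concat]; simp [h6]
          rw [e]
          have e2 : x ^ (k + 1) = (x / xc) ^ (k + 1) * xc ^ (k + 1) := by
            rw [← mul_pow]; congr 1; field_simp
          rw [e2]
          exact mul_le_mul_of_nonneg_right (pow_le_pow_of_le_one hr0 hr1 hk) (by positivity)
        refine (Finset.sum_le_card_nsmul _ _ _ this).trans (le_of_eq ?_)
        rw [nsmul_eq_mul]; ring
    _ = (x / xc) ^ H * ∑ k ∈ Finset.range N, (xc ^ (k + 1) * ((Tp H k).card : ℝ)) := by rw [Finset.mul_sum]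
    _ ≤ (x / xc) ^ H * 1 := mul_le_mul_of_nonneg_left (B_le H N hH) (by positivity)
    _ = _ := mul_one _

theorem UU_nonneg {x : ℝ} (hx : 0 ≤ x) (H N : ℕ) : 0 ≤ UU x H N := Finset.sum_nonneg fun _ _ => by positivity

theorem UU_bound {x : ℝ} (hx : 0 < x) (hxc : x < xc) (hx1 : x ≤ 1) : ∃ K, 0 ≤ K ∧ ∀ H N, UU x H N ≤ K := by
  have hc := xc_pos
  set ρ := x / xc with hρ
  have hr0 : 0 ≤ ρ := by positivity
  have hr1 : ρ < 1 := (div_lt_one hc).2 hxc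
  have key : ∀ N H, 1 + UU x H N ≤ (if H = 0 then 1 else 2) * Real.exp (∑ h ∈ Finset.range H, 3 * ρ ^ (h + 1)) := by
    intro N H
    induction H with
    | zero => simp [UU_zero]
    | succ H ih =>
      have h1 := UU_rec hx.le H N
      have h2 := BB_le hx hxc.le (H + 1) N (by omega)
      have h3 := UU_nonneg hx.le H N
      have h4 : 0 ≤ BB x (H + 1) N := Finset.sum_nonneg fun _ _ => by positivity
      rw [Finset.sum_range_succ, Real.exp_add]
      have h5 := Real.add_one_le_exp (3 * ρ ^ (H + 1))
      set e1 := Real.exp (3 * ρ ^ (H + 1))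
      set e0 := Real.exp (∑ h ∈ Finset.range H, 3 * ρ ^ (h + 1))
      rw [← hρ] at h2
      set b := BB x (H + 1) N
      set u := UU x H N
      have h6 : 0 ≤ b * u := mul_nonneg h4 h3
      have h7 : x * b ≤ b := mul_le_of_le_one_left h4 hx1
      have h8 : x * (b * u) ≤ b * u := mul_le_of_le_one_left h6 hx1
      have h9 : b ≤ (e1 - 1) / 3 := by linarith
      rw [if_neg (by omega)]
      rcases Nat.eq_zero_or_pos H with rfl | hH
      · have hu : u = 0 := UU_zero x N
        simp at h1
        have : e0 = 1 := by simp [e0]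
        rw [this]
        rw [hu] at h1
        nlinarith
      · rw [if_neg (by omega)] at h1 ih
        have h10 : (1 + u) * e1 ≤ 2 * e0 * e1 := mul_le_mul_of_nonneg_right ih (by positivity)
        have h11 : (1 + u) * b ≤ (1 + u) * ((e1 - 1) / 3) := mul_le_mul_of_nonneg_left h9 (by linarith)
        nlinarith
  refine ⟨2 * Real.exp (3 * (ρ * (1 - ρ)⁻¹)), by positivity, fun H N => ?_⟩
  have h1 := key N H
  have h2 : ∑ h ∈ Finset.range H, 3 * ρ ^ (h + 1) ≤ 3 * (ρ * (1 - ρ)⁻¹) := by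
    rw [← Finset.mul_sum]
    refine mul_le_mul_of_nonneg_left ?_ (by norm_num)
    have := Summable.sum_le_tsum (Finset.range H) (fun i _ => by positivity) (summable_geometric_of_lt_one hr0 hr1)
    rw [tsum_geometric_of_lt_one hr0 hr1] at this
    simp only [pow_succ']
    rw [← Finset.mul_sum]
    exact mul_le_mul_of_nonneg_left this hr0
  have h3 := Real.exp_le_exp.2 h2
  have h4 : (if H = 0 then (1 : ℝ) else 2) ≤ 2 := by split_ifs <;> norm_num
  have h5 := mul_le_mul h4 h3 (by positivity) (by norm_num)
  linarith
end Hex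

namespace Hex

theorem mv_back (v w q z : ℤ × ℤ) : mv (mv w q v) v (mv w q z) = z := by
  unfold mv
  split_ifs with h1 h2 h2
  · ext <;> simp
  · exfalso; dsimp only at h2; omega
  · exfalso; dsimp only at h2; omega
  · ext <;> simp

open Classical in
noncomputable def HH (v : ℤ × ℤ) (n : ℕ) : Finset (List (ℤ × ℤ)) :=
  (W v n).filter (fun l => hz l ∧ hz l.reverse)

theorem odd_min {v : ℤ × ℤ} {n : ℕ} {l : List (ℤ × ℤ)} (hl : l ∈ W v (n + 1)) (h1 : hz l) (h2 : hz l.reverse) :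
    ∃ w ∈ l, (w.1 + w.2) % 2 = 1 ∧ ∀ z ∈ l, w.2 ≤ z.2 := by
  classical
  obtain ⟨hlen, hnd, hc, -⟩ := mem_W.1 hl
  obtain ⟨m, hm, hmin⟩ := Finset.exists_min_image l.toFinset (fun w => w.2)
    ⟨l.head (by rintro rfl; simp at hlen), by simp⟩
  simp only [List.mem_toFinset] at hm hmin
  by_cases hp : (m.1 + m.2) % 2 = 1
  · exact ⟨m, hm, hp, hmin⟩
  have good : ∀ a, Adj m a → a.2 = m.2 → a ∈ l → ∃ w ∈ l, (w.1 + w.2) % 2 = 1 ∧ ∀ z ∈ l, w.2 ≤ z.2 := by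
    intro a ha hr hal
    refine ⟨a, hal, ?_, fun z hz' => hr ▸ hmin z hz'⟩
    unfold Adj at ha; omega
  obtain ⟨s, r, rfl⟩ := List.append_of_mem hm
  have hc' := List.isChain_split.1 hc
  match r with
  | [] =>
    rcases List.eq_nil_or_concat s with rfl | ⟨s0, a, rfl⟩
    · simp at hlen
    · rw [List.concat_eq_append] at *
      refine good a ?_ (h2 m a s0.reverse (by simp)).symm (by simp)
      have := hc'.1
      rw [List.append_assoc, List.singleton_append] at this
      have := (List.isChain_append_cons_cons.1 this).2.1
      exact this.symm
  | b :: r =>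
    have hb : Adj m b := (List.isChain_cons_cons.1 hc'.2).1
    rcases List.eq_nil_or_concat s with rfl | ⟨s0, a, rfl⟩
    · exact good b hb (h1 m b r (by simp)).symm (by simp)
    · rw [List.concat_eq_append] at *
      have ha : Adj m a := by
        have := hc'.1
        rw [List.append_assoc, List.singleton_append] at this
        have := (List.isChain_append_cons_cons.1 this).2.1
        exact this.symm
      by_cases e1 : a.2 = m.2
      · exact good a ha e1 (by simp)
      by_cases e2 : b.2 = m.2
      · exact good b hb e2 (by simp)
      exfalso
      have hab : a ≠ b := by
        rintro rfl
        simp [List.nodup_append] at hnd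
      apply hab
      rw [Prod.ext_iff]
      unfold Adj at ha hb; omega

theorem hz_map {v w : ℤ × ℤ} {l : List (ℤ × ℤ)} (h : hz l) : hz (l.map (mv v w)) := by
  intro a b r hh
  match l with
  | [] => simp at hh
  | [x] => simp at hh
  | x :: y :: l =>
    simp at hh
    have := h x y l rfl
    rw [← hh.1, ← hh.2.1]
    unfold mv; split_ifs <;> simp [this]

theorem hz_pre {s t : List (ℤ × ℤ)} (h : hz (s ++ t)) : hz s := by
  rintro a b r rfl
  exact h a b (r ++ t) (by simp)

theorem rows_le {l : List (ℤ × ℤ)} {v : ℤ × ℤ} (hc : l.IsChain Adj) (hl : l.getLast? = some v) :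
    ∀ w ∈ l, w.2 + 1 ≤ v.2 + l.length := by
  induction l with
  | nil => simp
  | cons a l ih =>
    match l with
    | [] => simp at hl; simp [hl]
    | b :: l =>
      rw [List.getLast?_cons_cons] at hl
      have hc' := List.isChain_cons_cons.1 hc
      have ih' := ih hc'.2 hl
      intro w hw
      have hb := ih' b (by simp)
      rcases List.mem_cons.1 hw with rfl | hw
      · have := hc'.1
        unfold Adj at this
        simp only [List.length_cons] at *
        push_cast at *
        omega
      · have := ih' w hw
        simp only [List.length_cons] at *
        push_cast at *
        omega

theorem norm_CC {s : List (ℤ × ℤ)} {w : ℤ × ℤ} {N : ℕ} (h1 : s ∈ W w (s.length - 1)) (hN : s.length ≤ N) (h2 : hz s)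
    (hw : (w.1 + w.2) % 2 = 1) (hmin : ∀ z ∈ s, w.2 ≤ z.2) : s.map (mv w (0, 1)) ∈ CC N N := by
  obtain ⟨hlen, hnd, hc, hlast⟩ := mem_W.1 (map_mv_W (w := (0, 1)) h1)
  rw [mem_CC]
  refine ⟨⟨hnd, hc, hlast, by simpa using hN⟩, ?_, hz_map h2⟩
  intro y hy
  have h3 := rows_le hc hlast y hy
  rw [List.length_map] at h3
  refine ⟨?_, by simp at h3; omega⟩
  rw [List.mem_map] at hy
  obtain ⟨z, hz', rfl⟩ := hy
  have := hmin z hz'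
  unfold mv
  rw [if_pos (by dsimp only; omega)]
  dsimp only; omega

def J2 (v : ℤ × ℤ) (p : List (ℤ × ℤ) × List (ℤ × ℤ)) : List (ℤ × ℤ) :=
  (p.1 ++ p.2.reverse.tail).map (mv (p.2.headD (0, 0)) v)

theorem HH_le {x : ℝ} (hx : 0 ≤ x) (v : ℤ × ℤ) (n : ℕ) :
    ((HH v (n + 1)).card : ℝ) * x ^ (n + 3) ≤ UU x (n + 2) (n + 2) ^ 2 := by
  classical
  have hsub : HH v (n + 1) ⊆ ((CC (n + 2) (n + 2) ×ˢ CC (n + 2) (n + 2)).filter 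
      (fun p => p.1.length + p.2.length = n + 3)).image (J2 v) := by
    intro l hl
    simp only [HH, Finset.mem_filter] at hl
    obtain ⟨hl, h1, h2⟩ := hl
    obtain ⟨w, hwl, hodd, hmin⟩ := odd_min hl h1 h2
    have hlast := (mem_W.1 hl).2.2.2
    have hlen0 := (mem_W.1 hl).1
    obtain ⟨s, r, rfl⟩ := List.append_of_mem hwl
    obtain ⟨g1, g2, g3⟩ := split_W hl
    have hlast2 := split_last hlast
    have hrev : (w :: r).reverse ∈ W w ((w :: r).reverse.length - 1) := by
      obtain ⟨a1, a2, a3, a4⟩ := mem_W.1 g1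
      rw [mem_W]
      refine ⟨by simp, List.nodup_reverse.2 a2, ?_, by simp⟩
      rw [List.isChain_reverse]
      exact a3.imp fun _ _ h => h.symm
    rw [Finset.mem_image]
    refine ⟨((s ++ [w]).map (mv w (0, 1)), (w :: r).reverse.map (mv w (0, 1))), ?_, ?_⟩
    · rw [Finset.mem_filter, Finset.mem_product]
      refine ⟨⟨?_, ?_⟩, ?_⟩
      · refine norm_CC (by simpa using g2) (by simp; omega) ?_ hodd ?_
        · apply hz_pre (t := r); simpa using h1
        · intro z hz'; exact hmin z (by simp at hz' ⊢; tauto)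
      · refine norm_CC hrev (by simp; omega) ?_ hodd ?_
        · apply hz_pre (t := s.reverse); simpa using h2
        · intro z hz'; exact hmin z (by simp at hz' ⊢; tauto)
      · simp; omega
    · have hh : (List.map (mv w (0, 1)) (w :: r).reverse).headD (0, 0) = mv w (0, 1) v := by
        rw [← List.head?_reverse] at hlast2
        cases hh : (w :: r).reverse with
        | nil => simp at hh
        | cons a t => 
          rw [hh] at hlast2
          simp at hlast2; simp [hlast2]
      have e1 : (List.map (mv w (0, 1)) (w :: r).reverse).reverse.tail = r.map (mv w (0, 1)) := by
        rw [← List.map_reverse, List.reverse_reverse]; simp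
      unfold J2
      simp only
      rw [hh, e1, ← List.map_append, List.map_map, List.map_congr_left (g := id)]
      · simp
      · intro a _; exact mv_back _ _ _ _
  have h1 := (Finset.card_le_card hsub).trans Finset.card_image_le
  calc ((HH v (n + 1)).card : ℝ) * x ^ (n + 3) ≤ 
      ∑ p ∈ (CC (n + 2) (n + 2) ×ˢ CC (n + 2) (n + 2)).filter (fun p => p.1.length + p.2.length = n + 3), x ^ (n + 3) := by
        rw [Finset.sum_const, nsmul_eq_mul]
        gcongr
    _ = ∑ p ∈ (CC (n + 2) (n + 2) ×ˢ CC (n + 2) (n + 2)).filter (fun p => p.1.length + p.2.length = n + 3), 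
        x ^ p.1.length * x ^ p.2.length := by
        refine Finset.sum_congr rfl fun p hp => ?_
        rw [← pow_add, (Finset.mem_filter.1 hp).2]
    _ ≤ ∑ p ∈ CC (n + 2) (n + 2) ×ˢ CC (n + 2) (n + 2), x ^ p.1.length * x ^ p.2.length := 
        Finset.sum_le_sum_of_subset_of_nonneg (Finset.filter_subset _ _) fun _ _ _ => by positivity
    _ = _ := by
        rw [Finset.sum_product, pow_two]
        unfold UU
        rw [Finset.sum_mul_sum]

/-- the vertical neighbour -/
def vn (v : ℤ × ℤ) : ℤ × ℤ := if (v.1 + v.2) % 2 = 0 then (v.1, v.2 + 1) else (v.1, v.2 - 1)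

theorem vn_eq {v a : ℤ × ℤ} (h : Adj v a) (h2 : v.2 ≠ a.2) : a = vn v := by
  unfold vn
  unfold Adj at h
  rw [Prod.ext_iff]
  split_ifs <;> dsimp only <;> omega

theorem hz_strip {a b : ℤ × ℤ} {l : List (ℤ × ℤ)} (hc : (a :: b :: l).IsChain Adj) (hn : (a :: b :: l).Nodup)
    (h : a.2 ≠ b.2) : hz (b :: l) := by
  intro p q r hh
  obtain ⟨rfl, rfl⟩ := List.cons.inj hh
  by_contra hne
  have h1 := (List.isChain_cons_cons.1 hc).1
  have h2 := (List.isChain_cons_cons.1 (List.isChain_cons_cons.1 hc).2).1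
  have e1 := vn_eq h1.symm h.symm
  have e2 := vn_eq h2 hne
  rw [← e1] at e2
  subst e2
  simp at hn

open Classical in
noncomputable def GG (v : ℤ × ℤ) (n : ℕ) : Finset (List (ℤ × ℤ)) := (W v n).filter hz

theorem W_le_GG (v : ℤ × ℤ) (n : ℕ) : (W v (n + 1)).card ≤ (GG v (n + 1)).card + (GG v n).card := by
  classical
  have : W v (n + 1) ⊆ GG v (n + 1) ∪ (GG v n).image (fun l => vn (l.headD (0, 0)) :: l) := by
    intro l hl
    rw [Finset.mem_union]
    by_cases h : hz l
    · left; simp only [GG, Finset.mem_filter]; exact ⟨hl, h⟩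
    · right
      unfold hz at h
      push Not at h
      obtain ⟨a, b, r, rfl, hab⟩ := h
      obtain ⟨g1, g2, g3, g4⟩ := mem_W.1 hl
      rw [Finset.mem_image]
      refine ⟨b :: r, ?_, ?_⟩
      · simp only [GG, Finset.mem_filter]
        refine ⟨?_, hz_strip g3 g2 hab⟩
        rw [mem_W]
        refine ⟨by simpa using g1, (List.nodup_cons.1 g2).2, g3.tail, ?_⟩
        rw [List.getLast?_cons_cons] at g4; exact g4
      · rw [List.headD_cons, ← vn_eq (List.isChain_cons_cons.1 g3).1.symm hab.symm]
  refine (Finset.card_le_card this).trans ((Finset.card_union_le _ _).trans ?_)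
  exact Nat.add_le_add_left Finset.card_image_le _

theorem GG_le_HH (v : ℤ × ℤ) (n : ℕ) : (GG v (n + 1)).card ≤ (HH v (n + 1)).card + (HH (vn v) n).card := by
  classical
  have : GG v (n + 1) ⊆ HH v (n + 1) ∪ (HH (vn v) n).image (fun l => l ++ [v]) := by
    intro l hl
    simp only [GG, Finset.mem_filter] at hl
    obtain ⟨hl, hz1⟩ := hl
    rw [Finset.mem_union]
    by_cases h : hz l.reverse
    · left; simp only [HH, Finset.mem_filter]; exact ⟨hl, hz1, h⟩
    · right
      unfold hz at h
      push Not at h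
      obtain ⟨a, b, r, e, hab⟩ := h
      have e' : l = r.reverse ++ [b, a] := by
        have := congrArg List.reverse e
        simpa using this
      obtain ⟨g1, g2, g3, g4⟩ := mem_W.1 hl
      have ha : a = v := by rw [e'] at g4; simpa using g4
      subst ha
      have c1 : (a :: b :: r).IsChain Adj := by
        rw [← e, List.isChain_reverse]; exact g3.imp fun _ _ h => h.symm
      have c2 : (a :: b :: r).Nodup := by rw [← e]; exact List.nodup_reverse.2 g2
      rw [Finset.mem_image]
      refine ⟨r.reverse ++ [b], ?_, by rw [e']; simp⟩
      simp only [HH, Finset.mem_filter]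
      refine ⟨?_, ?_, ?_⟩
      · rw [mem_W]
        have e2 : r.reverse ++ [b, a] = (r.reverse ++ [b]) ++ [a] := by simp
        rw [e', e2] at g1 g2 g3
        refine ⟨by simpa using g1, (List.nodup_append.1 g2).1, (List.isChain_append.1 g3).1, ?_⟩
        rw [← vn_eq (List.isChain_cons_cons.1 c1).1 hab]; simp
      · apply hz_pre (t := [a])
        rw [e'] at hz1; simpa using hz1
      · have := hz_strip c1 c2 hab
        simpa using this
  refine (Finset.card_le_card this).trans ((Finset.card_union_le _ _).trans ?_)
  exact Nat.add_le_add_left Finset.card_image_le _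

theorem xc_lt : xc < 1 := by
  have h : 1 < 1 / xc := by
    rw [xc_inv]
    have := Real.sqrt_nonneg 2
    exact Real.lt_sqrt_of_sq_lt (by linarith)
  have := xc_pos
  rw [lt_div_iff₀ this] at h; linarith

theorem σ_bound {x : ℝ} (hx : 0 < x) (hxc : x < xc) : ∃ K, ∀ n, (σ (n + 3) : ℝ) * x ^ (n + 5) ≤ K := by
  have hx1 : x ≤ 1 := (hxc.trans xc_lt).le
  obtain ⟨K, hK, hU⟩ := UU_bound hx hxc hx1
  refine ⟨4 * K ^ 2, fun n => ?_⟩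
  have hb : ∀ v m, m ≤ n + 2 → ((HH v (m + 1)).card : ℝ) * x ^ (n + 5) ≤ K ^ 2 := by
    intro v m hm
    calc _ ≤ ((HH v (m + 1)).card : ℝ) * x ^ (m + 3) := by
          refine mul_le_mul_of_nonneg_left (pow_le_pow_of_le_one hx.le hx1 (by omega)) (by positivity)
      _ ≤ _ := HH_le hx.le v m
      _ ≤ _ := pow_le_pow_left₀ (UU_nonneg hx.le _ _) (hU _ _) 2
  have h1 : σ (n + 3) ≤ _ := W_le_GG (0, 0) (n + 2)
  have h2 := GG_le_HH (0, 0) (n + 2)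
  have h3 := GG_le_HH (0, 0) (n + 1)
  rw [show n + 1 + 1 = n + 2 from rfl] at h3
  have h4 : (σ (n + 3) : ℝ) ≤ (HH (0, 0) (n + 2 + 1)).card + (HH (vn (0, 0)) (n + 2)).card +
      ((HH (0, 0) (n + 2)).card + (HH (vn (0, 0)) (n + 1)).card) := by
    have : σ (n + 3) ≤ (HH (0, 0) (n + 2 + 1)).card + (HH (vn (0, 0)) (n + 2)).card +
      ((HH (0, 0) (n + 2)).card + (HH (vn (0, 0)) (n + 1)).card) := by
      omega
    exact_mod_cast this
  have h5 := mul_le_mul_of_nonneg_right h4 (by positivity : 0 ≤ x ^ (n + 5))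
  have a1 := hb (0, 0) (n + 2) (by omega)
  have a2 := hb (vn (0, 0)) (n + 1) (by omega)
  have a3 := hb (0, 0) (n + 1) (by omega)
  have a4 := hb (vn (0, 0)) n (by omega)
  nlinarith

end Hex

namespace Hex

theorem hex_adj (p q : ℤ × ℤ) : hexLattice.Adj p q ↔ Adj p q := by
  obtain ⟨a, b⟩ := p
  obtain ⟨c, d⟩ := q
  simp only [hexLattice, SimpleGraph.fromRel_adj, Adj, Int.even_iff, ne_eq, Prod.mk.injEq]
  rcases abs_cases (a - c) with h1 | h1 <;> rcases abs_cases (c - a) with h2 | h2 <;>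
  rcases abs_cases (b - d) with h3 | h3 <;> rcases abs_cases (d - b) with h4 | h4 <;>
  rcases le_total b d with h5 | h5 <;> simp only [h1.1, h2.1, h3.1, h4.1, h5, min_eq_left, min_eq_right] <;> omega

theorem exists_walk (l : List (ℤ × ℤ)) : ∀ v, (v :: l).IsChain Adj →
    ∃ w, ∃ p : hexLattice.Walk v w, p.support = v :: l := by
  induction l with
  | nil => intro v _; exact ⟨v, .nil, rfl⟩
  | cons u l ih =>
    intro v h
    rw [List.isChain_cons_cons] at h
    obtain ⟨w, p, hp⟩ := ih u h.2
    exact ⟨w, .cons ((hex_adj _ _).2 h.1) p, by simp [hp]⟩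

theorem chain_rev {l : List (ℤ × ℤ)} : l.reverse.IsChain Adj ↔ l.IsChain Adj := by
  rw [List.isChain_reverse]
  constructor <;> intro h <;> exact h.imp fun _ _ h => h.symm

theorem sawCount_eq (v : ℤ × ℤ) (n : ℕ) : sawCount hexLattice v n = σ n := by
  rw [← card_W v n, sawCount, ← Nat.card_eq_finsetCard]
  have hmem : ∀ p : {p : Σ w, hexLattice.Walk v w // p.2.IsPath ∧ p.2.length = n},
      p.1.2.support.reverse ∈ W v n := by
    rintro ⟨⟨w, p⟩, h1, h2⟩
    rw [mem_W]
    refine ⟨by simp [h2], List.nodup_reverse.2 h1.support_nodup, ?_, ?_⟩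
    · rw [chain_rev]
      exact p.isChain_adj_support.imp fun _ _ h => (hex_adj _ _).1 h
    · rw [List.getLast?_reverse]
      cases p <;> simp
  refine Nat.card_eq_of_bijective (fun p => ⟨_, hmem p⟩) ⟨?_, ?_⟩
  · rintro ⟨⟨w, p⟩, h1, h2⟩ ⟨⟨w', p'⟩, h1', h2'⟩ h
    have h : p.support = p'.support := by
      simpa using h
    have e : w = w' := by
      have a := p.getLast_support
      have b := p'.getLast_support
      rw [← a, ← b]
      simp only [h]
    subst e
    have := SimpleGraph.Walk.ext_support h
    subst this
    rfl
  · rintro ⟨l, hl⟩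
    have hl0 := hl
    rw [mem_W] at hl
    obtain ⟨a, b, c, d⟩ := hl
    rcases hr : l.reverse with _ | ⟨u, t⟩
    · simp at hr; subst hr; simp at a
    have hd : l.reverse.head? = some v := by rw [List.head?_reverse]; exact d
    rw [hr] at hd
    simp at hd
    subst hd
    obtain ⟨w, p, hp⟩ := exists_walk t u (by rw [← hr, chain_rev]; exact c)
    rw [← hr] at hp
    refine ⟨⟨⟨w, p⟩, ?_, ?_⟩, ?_⟩
    · rw [SimpleGraph.Walk.isPath_def, hp]; exact List.nodup_reverse.2 b
    · have := p.length_support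
      rw [hp] at this
      simp at this
      show p.length = n
      omega
    · simp [hp]

theorem σ_pos (n : ℕ) : 0 < σ n := by
  by_contra h
  have h0 : σ n = 0 := by omega
  apply not_summable
  rw [← summable_nat_add_iff n]
  have : (fun m => (σ (m + n) : ℝ) * xc ^ (m + n)) = fun _ => 0 := by
    funext m
    have := σ_mul m n
    rw [h0, Nat.mul_zero, Nat.le_zero] at this
    simp [this]
  rw [this]
  exact summable_zero

theorem sub : Subadditive (fun n => Real.log (σ n)) := by
  intro m n
  have hm : (0:ℝ) < σ m := by exact_mod_cast σ_pos m
  have hn : (0:ℝ) < σ n := by exact_mod_cast σ_pos n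
  rw [← Real.log_mul hm.ne' hn.ne']
  refine Real.log_le_log (by exact_mod_cast σ_pos _) ?_
  exact_mod_cast σ_mul m n

theorem sub_bdd : BddBelow (Set.range fun n : ℕ => Real.log (σ n) / n) := by
  refine ⟨0, ?_⟩
  rintro _ ⟨n, rfl⟩
  exact div_nonneg (Real.log_natCast_nonneg _) (Nat.cast_nonneg _)

theorem lim_eq : sub.lim = - Real.log xc := by
  apply le_antisymm
  · by_contra! h
    obtain ⟨c, hc1, hc2⟩ := exists_between h
    have hx : Real.exp (-c) < xc := by
      rw [← Real.lt_log_iff_exp_lt xc_pos]; linarith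
    obtain ⟨K, hK⟩ := σ_bound (Real.exp_pos (-c)) hx
    have hlim : Tendsto (fun n : ℕ => Real.exp (sub.lim - c) ^ n) atTop atTop :=
      tendsto_pow_atTop_atTop_of_one_lt (by rw [Real.one_lt_exp_iff]; linarith)
    obtain ⟨n, hn⟩ := ((tendsto_add_atTop_nat 3).eventually
      (hlim.eventually_gt_atTop (K * Real.exp (c) ^ 2))).exists
    have h1 := sub.lim_le_div sub_bdd (n := n + 3) (by omega)
    have hp : (0:ℝ) < σ (n + 3) := by exact_mod_cast σ_pos _
    rw [le_div_iff₀ (by positivity), Real.le_log_iff_exp_le hp] at h1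
    have h2 := hK n
    have e1 : Real.exp (sub.lim - c) ^ (n + 3) = Real.exp (sub.lim * (n + 3 : ℕ)) * Real.exp (-c) ^ (n+3) := by
      rw [← Real.exp_nat_mul, ← Real.exp_nat_mul, ← Real.exp_add]; congr 1; ring
    have e2 : Real.exp (-c) ^ (n + 5) * Real.exp c ^ 2 = Real.exp (-c) ^ (n+3) := by
      rw [show n + 5 = n + 3 + 2 from rfl, pow_add, mul_assoc, ← mul_pow, ← Real.exp_add]; simp
    have h3 : Real.exp (sub.lim - c) ^ (n + 3) ≤ K * Real.exp c ^ 2 := by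
      rw [e1, ← e2, ← mul_assoc]
      refine mul_le_mul_of_nonneg_right (le_trans ?_ h2) (by positivity)
      exact mul_le_mul_of_nonneg_right h1 (by positivity)
    linarith
  · by_contra! h
    obtain ⟨c, hc1, hc2⟩ := exists_between h
    apply not_summable
    have hr : Real.exp c * xc < 1 := by
      rw [← Real.exp_log xc_pos, ← Real.exp_add, Real.exp_lt_one_iff]
      linarith
    have hr0 : 0 ≤ Real.exp c * xc := mul_nonneg (Real.exp_pos _).le xc_pos.le
    refine (summable_geometric_of_lt_one hr0 hr).of_norm_bounded_eventually_nat ?_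
    have := (sub.tendsto_lim sub_bdd).eventually_lt_const hc1
    filter_upwards [this, eventually_gt_atTop 0] with n hn h0
    have h0' : (0:ℝ) < n := by exact_mod_cast h0
    have hp : (0:ℝ) < σ n := by exact_mod_cast σ_pos _
    rw [div_lt_iff₀ h0', Real.log_lt_iff_lt_exp hp] at hn
    have hx := xc_pos
    rw [Real.norm_of_nonneg (by positivity), mul_pow, ← Real.exp_nat_mul, mul_comm (n:ℝ)]
    exact mul_le_mul_of_nonneg_right hn.le (by positivity)

end Hex

/-- The Duminil-Copin–Smirnov theorem: the connective constant of the hexagonal lattice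
is `√(2 + √2)`. -/
theorem hexagonal_connective_constant :
    ∀ v : ℤ × ℤ,
      Tendsto (fun n : ℕ => (sawCount hexLattice v n : ℝ) ^ ((1 : ℝ) / n)) atTop
        (nhds (Real.sqrt (2 + Real.sqrt 2))) := by
  intro v
  simp only [Hex.sawCount_eq]
  have h := (Real.continuous_exp.tendsto _).comp (Hex.sub.tendsto_lim Hex.sub_bdd)
  rw [Hex.lim_eq, Real.exp_neg, Real.exp_log Hex.xc_pos, ← one_div, Hex.xc_inv] at h
  refine h.congr fun n => ?_
  have hp : (0:ℝ) < Hex.σ n := by exact_mod_cast Hex.σ_pos _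
  rw [Real.rpow_def_of_pos hp]
  simp [div_eq_mul_inv]
end
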